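/- arXiv:2306.00109 — 17 statements merged into one kernel-verified Lean document; each statement's English description precedes it below -/
import Mathlib

section
/- Let D be an integral residuated lattice, and let B, C ⊆ D be subsets with B ∪ C = D, B ∩ C = {1}, and b < c for all b ∈ B∖{1} and c ∈ C. Assume C is closed under ∨, ∧, ·, \, / and B is closed under ∧, ·, \, /. Then for all b ∈ B∖{1} and c ∈ C, c·b = b and b·c = b (so D is the 1-sum of B and C). -/
/-- An integral residuated lattice: a lattice, a monoid, residuation for the two
divisions `ld x z` (i.e. `x \ z`) and `rd z y` (i.e. `z / y`), with `1` the top. -/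
class IRL (α : Type*) extends Lattice α, Monoid α where
  ld : α → α → α
  rd : α → α → α
  mul_le_iff_ld : ∀ x y z : α, x * y ≤ z ↔ y ≤ ld x z
  mul_le_iff_rd : ∀ x y z : α, x * y ≤ z ↔ x ≤ rd z y
  le_one : ∀ x : α, x ≤ 1

namespace IRL

variable {α : Type*} [IRL α]

/-- `theta F x y` iff `x\y ∈ F` and `y\x ∈ F`. -/
def theta (F : Set α) (x y : α) : Prop := ld x y ∈ F ∧ ld y x ∈ F

/-- The equivalence class `[x]_F`. -/
def cls (F : Set α) (x : α) : Set α := {y | theta F x y}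

/-- A congruence filter of an IRL. -/
structure IsCongFilter (F : Set α) : Prop where
  nonempty : F.Nonempty
  upward : ∀ x ∈ F, ∀ y : α, x ≤ y → y ∈ F
  mul_mem : ∀ x ∈ F, ∀ y ∈ F, x * y ∈ F
  conjL : ∀ x ∈ F, ∀ y : α, ld y (x * y) ∈ F
  conjR : ∀ x ∈ F, ∀ y : α, rd (y * x) y ∈ F

end IRL

/-- if `D` is an IRL, `B ∪ C = D`, `B ∩ C = {1}`, every element of
`B ∖ {1}` is strictly below every element of `C`, `C` is closed under the five
operations and `B` under `∧, ·, \, /`, then `c·b = b` and `b·c = b` for all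
`b ∈ B ∖ {1}`, `c ∈ C` (so `D` is the 1-sum of `B` and `C`). -/
theorem one_sum_unique {D : Type*} [IRL D] (B C : Set D)
    (hunion : B ∪ C = Set.univ)
    (hinter : B ∩ C = {1})
    (hlt : ∀ b ∈ B, b ≠ 1 → ∀ c ∈ C, b < c)
    (hCsup : ∀ x ∈ C, ∀ y ∈ C, x ⊔ y ∈ C)
    (hCinf : ∀ x ∈ C, ∀ y ∈ C, x ⊓ y ∈ C)
    (hCmul : ∀ x ∈ C, ∀ y ∈ C, x * y ∈ C)
    (hCld : ∀ x ∈ C, ∀ y ∈ C, IRL.ld x y ∈ C)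
    (hCrd : ∀ x ∈ C, ∀ y ∈ C, IRL.rd x y ∈ C)
    (hBinf : ∀ x ∈ B, ∀ y ∈ B, x ⊓ y ∈ B)
    (hBmul : ∀ x ∈ B, ∀ y ∈ B, x * y ∈ B)
    (hBld : ∀ x ∈ B, ∀ y ∈ B, IRL.ld x y ∈ B)
    (hBrd : ∀ x ∈ B, ∀ y ∈ B, IRL.rd x y ∈ B) :
    ∀ b ∈ B, b ≠ 1 → ∀ c ∈ C, c * b = b ∧ b * c = b := by
  intro b hb hb1 c hc
  have key : ∀ d : D, d ≤ b → d ∈ B := by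
    intro d hd
    have h : d ∈ B ∪ C := by rw [hunion]; trivial
    rcases h with h | h
    · exact h
    · exact absurd (lt_of_lt_of_le (hlt b hb hb1 d h) hd) (lt_irrefl _)
  have top : ∀ e ∈ B, c ≤ e → e = 1 := by
    intro e he hce
    by_contra hne
    exact absurd (lt_of_lt_of_le (hlt e he hne c hc) hce) (lt_irrefl _)
  constructor
  · have h1 : c * b ≤ b := by
      rw [IRL.mul_le_iff_rd]
      refine le_trans (IRL.le_one c) ?_
      rw [← IRL.mul_le_iff_rd, one_mul]
    refine le_antisymm h1 ?_
    have h2 := top _ (hBrd _ (key _ h1) b hb) ((IRL.mul_le_iff_rd _ _ _).1 le_rfl)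
    have h3 := (IRL.mul_le_iff_rd 1 b (c * b)).2 h2.ge
    rwa [one_mul] at h3
  · have h1 : b * c ≤ b := by
      rw [IRL.mul_le_iff_ld]
      refine le_trans (IRL.le_one c) ?_
      rw [← IRL.mul_le_iff_ld, mul_one]
    refine le_antisymm h1 ?_
    have h2 := top _ (hBld b hb _ (key _ h1)) ((IRL.mul_le_iff_ld _ _ _).1 le_rfl)
    have h3 := (IRL.mul_le_iff_ld b 1 (b * c)).2 h2.ge
    rwa [mul_one] at h3
end

section
/- Let D be a gluing of B and C over F. Then for every b ∈ B∖F and c ∈ C∖F: c·b = b·c, c·b θ_F b, and c·b ≤ b' for every b' ∈ D with b' θ_F b; that is, c·b = b·c is the minimum of the class [b]_F (so this minimum exists and does not depend on the choice of c). -/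
/-- A gluing of `B` and `C` over the congruence filter `F = B ∩ C`. -/
structure GluingOverF {D : Type*} [IRL D] (B C F : Set D) : Prop where
  union_eq : B ∪ C = Set.univ
  inter_eq : B ∩ C = F
  filt : IRL.IsCongFilter F
  one_mem : (1 : D) ∈ F
  lt_BC : ∀ b ∈ B \ F, ∀ c ∈ C \ F, b < c
  lt_CF : ∀ c ∈ C \ F, ∀ f ∈ F, f ≠ 1 → c < f
  C_sup : ∀ x ∈ C, ∀ y ∈ C, x ⊔ y ∈ C
  C_inf : ∀ x ∈ C, ∀ y ∈ C, x ⊓ y ∈ C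
  C_mul : ∀ x ∈ C, ∀ y ∈ C, x * y ∈ C
  C_ld : ∀ x ∈ C, ∀ y ∈ C, IRL.ld x y ∈ C
  C_rd : ∀ x ∈ C, ∀ y ∈ C, IRL.rd x y ∈ C
  B_inf : ∀ x ∈ B, ∀ y ∈ B, x ⊓ y ∈ B
  B_mul : ∀ x ∈ B, ∀ y ∈ B, x * y ∈ B
  B_ld : ∀ x ∈ B, ∀ y ∈ B, IRL.ld x y ∈ B
  B_rd : ∀ x ∈ B, ∀ y ∈ B, IRL.rd x y ∈ B

/-- in a gluing of `B` and `C` over `F`, for `b ∈ B∖F` and `c ∈ C∖F`,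
`c·b = b·c`, `c·b θ_F b`, and `c·b ≤ b'` for every `b'` with `b' θ_F b`; i.e.
`c·b = b·c` is the minimum of the class `[b]_F`. -/
theorem gluing_min_of_class {D : Type*} [IRL D] {B C F : Set D}
    (hg : GluingOverF B C F) :
    ∀ b ∈ B \ F, ∀ c ∈ C \ F,
      c * b = b * c ∧ IRL.theta F (c * b) b ∧
      ∀ b' : D, IRL.theta F b' b → c * b ≤ b' := by
  rintro b ⟨hbB, hbF⟩ c ⟨hcC, hcF⟩
  have mono : ∀ x y x' y' : D, x ≤ x' → y ≤ y' → x * y ≤ x' * y' := by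
    intro x y x' y' hx hy
    have h1 : x ≤ IRL.rd (x' * y') y' :=
      hx.trans ((IRL.mul_le_iff_rd _ _ _).1 le_rfl)
    have h2 : x * y' ≤ x' * y' := (IRL.mul_le_iff_rd _ _ _).2 h1
    exact (IRL.mul_le_iff_ld _ _ _).2 (hy.trans ((IRL.mul_le_iff_ld _ _ _).1 h2))
  have cb_le : c * b ≤ b := by
    simpa using mono c b 1 b (IRL.le_one c) le_rfl
  have bc_le : b * c ≤ b := by
    simpa using mono b c b 1 le_rfl (IRL.le_one c)
  have inB : ∀ x : D, x ≤ b → x ∈ B := by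
    intro x hx
    by_contra hxB
    have hxC : x ∈ C := by
      have : x ∈ B ∪ C := by rw [hg.union_eq]; trivial
      exact this.resolve_left hxB
    have hxF : x ∉ F := fun h => hxB (by rw [← hg.inter_eq] at h; exact h.1)
    exact absurd hx (not_le_of_gt (hg.lt_BC b ⟨hbB, hbF⟩ x ⟨hxC, hxF⟩))
  have inF : ∀ x ∈ B, c ≤ x → x ∈ F := by
    intro x hx hcx
    by_contra hxF
    exact absurd hcx (not_le_of_gt (hg.lt_BC x ⟨hx, hxF⟩ c ⟨hcC, hcF⟩))
  have ldone : ∀ x : D, x ≤ b → IRL.ld x b ∈ F := by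
    intro x hx
    exact hg.filt.upward 1 hg.one_mem _ ((IRL.mul_le_iff_ld _ _ _).1 (by simpa using hx))
  have thcb : IRL.theta F (c * b) b := by
    refine ⟨ldone _ cb_le, ?_⟩
    have hf : IRL.rd (c * b) b ∈ F :=
      inF _ (hg.B_rd _ (inB _ cb_le) _ hbB) ((IRL.mul_le_iff_rd _ _ _).1 le_rfl)
    refine hg.filt.upward _ (hg.filt.conjL _ hf b) _ ((IRL.mul_le_iff_ld _ _ _).1 ?_)
    exact ((IRL.mul_le_iff_ld _ _ _).2 le_rfl).trans ((IRL.mul_le_iff_rd _ _ _).2 le_rfl)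
  have thbc : IRL.theta F (b * c) b :=
    ⟨ldone _ bc_le, inF _ (hg.B_ld _ hbB _ (inB _ bc_le)) ((IRL.mul_le_iff_ld _ _ _).1 le_rfl)⟩
  have cle : ∀ f ∈ F, c ≤ f := by
    intro f hf
    by_cases h : f = 1
    · rw [h]; exact IRL.le_one c
    · exact (hg.lt_CF c ⟨hcC, hcF⟩ f hf h).le
  have min1 : ∀ b' : D, IRL.theta F b' b → b * c ≤ b' := fun b' h =>
    (IRL.mul_le_iff_ld _ _ _).2 (cle _ h.2)
  have min2 : ∀ b' : D, IRL.theta F b' b → c * b ≤ b' := by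
    intro b' h
    refine (IRL.mul_le_iff_rd _ _ _).2 (cle _ ?_)
    refine hg.filt.upward _ (hg.filt.conjR _ h.2 b) _ ((IRL.mul_le_iff_rd _ _ _).1 ?_)
    exact ((IRL.mul_le_iff_rd _ _ _).2 le_rfl).trans ((IRL.mul_le_iff_ld _ _ _).2 le_rfl)
  exact ⟨le_antisymm (min2 _ thbc) (min1 _ thcb), thcb, min2⟩
end

section
/- Let D be a gluing of B and C over F. Then for every b ∈ B∖F and c ∈ C∖F: c\b = b/c, c\b θ_F b, and b' ≤ c\b for every b' ∈ D with b' θ_F b; that is, c\b = b/c is the maximum of the class [b]_F (so this maximum exists and does not depend on the choice of c). -/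
/-- in a gluing of `B` and `C` over `F`, for `b ∈ B∖F` and `c ∈ C∖F`,
`c\b = b/c`, `c\b θ_F b`, and `b' ≤ c\b` for every `b'` with `b' θ_F b`; i.e.
`c\b = b/c` is the maximum of the class `[b]_F`. -/
theorem gluing_max_of_class {D : Type*} [IRL D] {B C F : Set D}
    (hg : GluingOverF B C F) :
    ∀ b ∈ B \ F, ∀ c ∈ C \ F,
      IRL.ld c b = IRL.rd b c ∧ IRL.theta F (IRL.ld c b) b ∧
      ∀ b' : D, IRL.theta F b' b → b' ≤ IRL.ld c b := by
  intro b hb c hc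
  have mono : ∀ x y z : D, x ≤ y → x * z ≤ y * z := fun x y z h =>
    (IRL.mul_le_iff_rd _ _ _).2 (h.trans ((IRL.mul_le_iff_rd _ _ _).1 le_rfl))
  have mono' : ∀ x y z : D, x ≤ y → z * x ≤ z * y := fun x y z h =>
    (IRL.mul_le_iff_ld _ _ _).2 (h.trans ((IRL.mul_le_iff_ld _ _ _).1 le_rfl))
  have mulL : ∀ x y : D, x * y ≤ y := fun x y => by
    simpa using mono x 1 y (IRL.le_one x)
  have mulR : ∀ x y : D, x * y ≤ x := fun x y => by
    simpa using mono' y 1 x (IRL.le_one y)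
  have ldE : ∀ x y : D, x * IRL.ld x y ≤ y := fun x y => (IRL.mul_le_iff_ld _ _ _).2 le_rfl
  have rdE : ∀ x y : D, IRL.rd y x * x ≤ y := fun x y => (IRL.mul_le_iff_rd _ _ _).2 le_rfl
  have oneF : ∀ x y : D, x ≤ y → IRL.ld x y ∈ F := fun x y h =>
    hg.filt.upward 1 hg.one_mem _ ((IRL.mul_le_iff_ld _ _ _).1 (by simpa using h))
  have notC : ∀ x ∈ C, ¬ x ≤ b := by
    intro x hx hxb
    by_cases hF : x ∈ F
    · exact hb.2 (hg.filt.upward x hF b hxb)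
    · exact absurd (hg.lt_BC b hb x ⟨hx, hF⟩) (not_lt_of_ge hxb)
  have inB : ∀ x : D, x ∉ C → x ∈ B := by
    intro x hx
    have h : x ∈ B ∪ C := by rw [hg.union_eq]; trivial
    exact h.resolve_right hx
  have geF : ∀ x ∈ B, c ≤ x → x ∈ F := by
    intro x hx hcx
    by_contra hF
    exact absurd (hg.lt_BC x ⟨hx, hF⟩ c hc) (not_lt_of_ge hcx)
  have Fge : ∀ x ∈ F, c ≤ x := by
    intro x hx
    by_cases h1 : x = 1
    · rw [h1]; exact IRL.le_one c
    · exact (hg.lt_CF c hc x hx h1).le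
  have lB : IRL.ld c b ∈ B :=
    inB _ fun h => notC _ (hg.C_mul c hc.1 _ h) (ldE c b)
  have rB : IRL.rd b c ∈ B :=
    inB _ fun h => notC _ (hg.C_mul _ h c hc.1) (rdE c b)
  have hl : b ≤ IRL.ld c b := (IRL.mul_le_iff_ld _ _ _).1 (mulL c b)
  -- `c\b` is in the class of `b`
  have th : IRL.ld (IRL.ld c b) b ∈ F := by
    have hf : IRL.rd b (IRL.ld c b) ∈ F :=
      geF _ (hg.B_rd b hb.1 _ lB) ((IRL.mul_le_iff_rd _ _ _).1 (ldE c b))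
    refine hg.filt.upward _ (hg.filt.conjL _ hf (IRL.ld c b)) _ ?_
    exact (IRL.mul_le_iff_ld _ _ _).1 ((ldE _ _).trans (rdE _ _))
  have th' : IRL.ld (IRL.rd b c) b ∈ F :=
    geF _ (hg.B_ld _ rB b hb.1) ((IRL.mul_le_iff_ld _ _ _).1 (rdE c b))
  have up1 : ∀ x : D, IRL.ld x b ∈ F → x ≤ IRL.rd b c := by
    intro x hx
    exact (IRL.mul_le_iff_rd _ _ _).1 ((mono' _ _ x (Fge _ hx)).trans (ldE x b))
  have up2 : ∀ x : D, IRL.ld x b ∈ F → x ≤ IRL.ld c b := by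
    intro x hx
    have h2 : c * x ≤ x * IRL.ld x b :=
      (mono _ _ x (Fge _ (hg.filt.conjR _ hx x))).trans (rdE _ _)
    exact (IRL.mul_le_iff_ld _ _ _).1 (h2.trans (ldE x b))
  exact ⟨le_antisymm (up1 _ th) (up2 _ th'), ⟨th, oneF _ _ hl⟩, fun b' h => up2 b' h.1⟩
end

section
/- Let B be an integral residuated lattice and F a compatible congruence filter of B, and for x ∈ B∖F let σ(x) denote the minimum of [x]_F. Then for all x, y ∈ B∖F: x·y ∈ B∖F and σ(x·y) = x·σ(y) = σ(x)·y (σ is a strong conucleus on B∖F). -/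
namespace IRL

variable {α : Type*} [IRL α]

lemma aux_mul_left (x : α) {a b : α} (h : a ≤ b) : x * a ≤ x * b :=
  (mul_le_iff_ld x a _).2 (h.trans ((mul_le_iff_ld x b _).1 le_rfl))

lemma aux_mul_right (x : α) {a b : α} (h : a ≤ b) : a * x ≤ b * x :=
  (mul_le_iff_rd a x _).2 (h.trans ((mul_le_iff_rd b x _).1 le_rfl))

lemma aux_ld (a b : α) : a * ld a b ≤ b := (mul_le_iff_ld a _ b).2 le_rfl

lemma theta_trans' {F : Set α} (hF : IsCongFilter F) {a b c : α}
    (h1 : theta F a b) (h2 : theta F b c) : theta F a c := by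
  have key : ∀ a b c : α, ld a b * ld b c ≤ ld a c := by
    intro a b c
    rw [← mul_le_iff_ld, ← mul_assoc]
    exact (aux_mul_right _ (aux_ld a b)).trans (aux_ld b c)
  exact ⟨hF.upward _ (hF.mul_mem _ h1.1 _ h2.1) _ (key a b c),
    hF.upward _ (hF.mul_mem _ h2.2 _ h1.2) _ (key c b a)⟩

lemma theta_mul_left {F : Set α} (hF : IsCongFilter F) (x : α) {a b : α}
    (h : theta F a b) : theta F (x * a) (x * b) := by
  have key : ∀ a b : α, ld a b ≤ ld (x * a) (x * b) := by
    intro a b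
    rw [← mul_le_iff_ld, mul_assoc]
    exact aux_mul_left x (aux_ld a b)
  exact ⟨hF.upward _ h.1 _ (key a b), hF.upward _ h.2 _ (key b a)⟩

lemma theta_mul_right {F : Set α} (hF : IsCongFilter F) (x : α) {a b : α}
    (h : theta F a b) : theta F (a * x) (b * x) := by
  have key : ∀ a b : α, ld x (ld a b * x) ≤ ld (a * x) (b * x) := by
    intro a b
    rw [← mul_le_iff_ld, mul_assoc]
    refine (aux_mul_left a (aux_ld x _)).trans ?_
    rw [← mul_assoc]
    exact aux_mul_right x (aux_ld a b)
  exact ⟨hF.upward _ (hF.conjL _ h.1 x) _ (key a b),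
    hF.upward _ (hF.conjL _ h.2 x) _ (key b a)⟩

end IRL

/-- if `F` is a compatible congruence filter of an IRL `B` and `σ x`
is the minimum of `[x]_F` (for `x ∉ F`), then for all `x, y ∉ F`: `x·y ∉ F` and
`σ(x·y) = x·σ(y) = σ(x)·y` (σ is a strong conucleus on `B ∖ F`). -/
theorem sigma_strong_conucleus {B : Type*} [IRL B] (F : Set B)
    (hF : IRL.IsCongFilter F)
    (σ γ : B → B)
    (hstrict : ∀ f ∈ F, ∀ b : B, b ∉ F → b < f)
    (hσ : ∀ x : B, x ∉ F → IsLeast (IRL.cls F x) (σ x))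
    (hγ : ∀ x : B, x ∉ F → IsGreatest (IRL.cls F x) (γ x))
    (habs : ∀ b : B, b ∉ F → ∀ x : B, x ∉ F →
      (∃ u : B, u ∉ F ∧ b * σ x = σ u) ∧ (∃ v : B, v ∉ F ∧ σ x * b = σ v)) :
    ∀ x : B, x ∉ F → ∀ y : B, y ∉ F →
      x * y ∉ F ∧ σ (x * y) = x * σ y ∧ σ (x * y) = σ x * y := by
  have key : ∀ a : B, a ∉ F → ∀ u : B, u ∉ F → IRL.theta F a (σ u) → σ a = σ u := by
    intro a ha u hu h
    have h1 : IRL.theta F u (σ u) := (hσ u hu).1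
    have h2 : IRL.theta F a (σ a) := (hσ a ha).1
    have h3 : IRL.theta F u a := IRL.theta_trans' hF h1 h.symm
    exact le_antisymm ((hσ a ha).2 h) ((hσ u hu).2 (IRL.theta_trans' hF h3 h2))
  intro x hx y hy
  have hxy : x * y ∉ F := by
    intro h
    refine hx (hF.upward _ h _ ?_)
    simpa using IRL.aux_mul_left x (IRL.le_one y)
  refine ⟨hxy, ?_, ?_⟩
  · obtain ⟨u, hu, e⟩ := (habs x hx y hy).1
    rw [e]
    refine key _ hxy u hu ?_
    rw [← e]
    exact IRL.theta_mul_left hF x (hσ y hy).1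
  · obtain ⟨u, hu, e⟩ := (habs y hy x hx).2
    rw [e]
    refine key _ hxy u hu ?_
    rw [← e]
    exact IRL.theta_mul_right hF y (hσ x hx).1
end

section
/- Let B be an integral residuated lattice and F a compatible congruence filter of B, and for x ∈ B∖F let σ(x) denote the minimum and γ(x) the maximum of [x]_F. Then (σ, γ) form a residuated pair on B∖F: for all x, y ∈ B∖F, σ(x) ≤ y if and only if x ≤ γ(y). -/
/-- if `F` is a compatible congruence filter of an IRL `B`, with `σ x`
the minimum and `γ x` the maximum of `[x]_F` (for `x ∉ F`), then `(σ, γ)` form a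
residuated pair on `B ∖ F`: `σ x ≤ y ↔ x ≤ γ y` for all `x, y ∉ F`. -/
theorem sigma_gamma_residuated_pair {B : Type*} [IRL B] (F : Set B)
    (hF : IRL.IsCongFilter F)
    (σ γ : B → B)
    (hstrict : ∀ f ∈ F, ∀ b : B, b ∉ F → b < f)
    (hσ : ∀ x : B, x ∉ F → IsLeast (IRL.cls F x) (σ x))
    (hγ : ∀ x : B, x ∉ F → IsGreatest (IRL.cls F x) (γ x))
    (habs : ∀ b : B, b ∉ F → ∀ x : B, x ∉ F →
      (∃ u : B, u ∉ F ∧ b * σ x = σ u) ∧ (∃ v : B, v ∉ F ∧ σ x * b = σ v)) :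
    ∀ x : B, x ∉ F → ∀ y : B, y ∉ F → (σ x ≤ y ↔ x ≤ γ y) := by
  intro x hx y hy
  have one_mem : (1 : B) ∈ F := by
    obtain ⟨f, hf⟩ := hF.nonempty
    exact hF.upward f hf 1 (IRL.le_one f)
  have mono : ∀ a b c : B, a ≤ b → a * c ≤ b * c := fun a b c h =>
    (IRL.mul_le_iff_rd a c (b * c)).2 (h.trans ((IRL.mul_le_iff_rd b c (b * c)).1 le_rfl))
  have mul_le_self : ∀ a c : B, a * c ≤ a := fun a c =>
    (IRL.mul_le_iff_ld a c a).2
      ((IRL.le_one c).trans ((IRL.mul_le_iff_ld a 1 a).1 (mul_one a).le))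
  have ld_mem : ∀ a b : B, a ≤ b → IRL.ld a b ∈ F := fun a b h =>
    hF.upward 1 one_mem _ ((IRL.mul_le_iff_ld a 1 b).1 ((mul_one a).le.trans h))
  have ld_app : ∀ a b : B, a * IRL.ld a b ≤ b := fun a b =>
    (IRL.mul_le_iff_ld a _ b).2 le_rfl
  constructor
  · intro h
    have hf : IRL.ld x (σ x) ∈ F := (hσ x hx).1.1
    have key : x ⊔ y ∈ IRL.cls F y := by
      refine ⟨ld_mem _ _ le_sup_right, hF.upward _ hf _ ?_⟩
      refine (IRL.mul_le_iff_ld _ _ _).1 ((IRL.mul_le_iff_rd _ _ _).2 (sup_le ?_ ?_))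
      · exact (IRL.mul_le_iff_rd _ _ _).1 ((ld_app _ _).trans h)
      · exact (IRL.mul_le_iff_rd _ _ _).1 (mul_le_self _ _)
    exact le_sup_left.trans ((hγ y hy).2 key)
  · intro h
    have hf : IRL.ld (γ y) y ∈ F := (hγ y hy).1.2
    have key : x ⊓ y ∈ IRL.cls F x := by
      refine ⟨hF.upward _ hf _ ?_, ld_mem _ _ inf_le_left⟩
      exact (IRL.mul_le_iff_ld _ _ _).1
        (le_inf (mul_le_self _ _) ((mono _ _ _ h).trans (ld_app _ _)))
    exact ((hσ x hx).2 key).trans inf_le_right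
end

section
/- Let B be an integral residuated lattice and F a compatible congruence filter of B, and for x ∈ B∖F let σ(x) denote the minimum of [x]_F. Then for all x, y ∈ B∖F: x·y ≤ σ(x) and y·x ≤ σ(x). -/
/-- if `F` is a compatible congruence filter of an IRL `B` and `σ x`
is the minimum of `[x]_F` (for `x ∉ F`), then `x·y ≤ σ x` and `y·x ≤ σ x` for all
`x, y ∉ F`. -/
theorem mul_le_sigma {B : Type*} [IRL B] (F : Set B)
    (hF : IRL.IsCongFilter F)
    (σ γ : B → B)
    (hstrict : ∀ f ∈ F, ∀ b : B, b ∉ F → b < f)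
    (hσ : ∀ x : B, x ∉ F → IsLeast (IRL.cls F x) (σ x))
    (hγ : ∀ x : B, x ∉ F → IsGreatest (IRL.cls F x) (γ x))
    (habs : ∀ b : B, b ∉ F → ∀ x : B, x ∉ F →
      (∃ u : B, u ∉ F ∧ b * σ x = σ u) ∧ (∃ v : B, v ∉ F ∧ σ x * b = σ v)) :
    ∀ x : B, x ∉ F → ∀ y : B, y ∉ F → x * y ≤ σ x ∧ y * x ≤ σ x := by
  intro x hx y hy
  have hf : IRL.ld x (σ x) ∈ F := (hσ x hx).1.1
  refine ⟨(IRL.mul_le_iff_ld _ _ _).2 (hstrict _ hf y hy).le, ?_⟩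
  have hg := hF.conjR _ hf x
  have h1 : y * x ≤ x * IRL.ld x (σ x) :=
    (IRL.mul_le_iff_rd _ _ _).2 (hstrict _ hg y hy).le
  exact h1.trans ((IRL.mul_le_iff_ld _ _ _).2 le_rfl)
end

section
/- (Existence of the gluing over a filter / strong amalgamation over a common filter.) Let B be an integral residuated lattice and F a compatible congruence filter of B such that x ∨ y ∈ B∖F for all x, y ∈ B∖F. Let C be an integral residuated lattice and G a congruence filter of C such that c < g for all c ∈ C∖G and g ∈ G. Let e be a map defined on F, injective, with image exactly G, satisfying e(1) = 1 and, for all x, y ∈ F: e(x·y) = e(x)·e(y), e(x\y) = e(x)\e(y), e(x/y) = e(x)/e(y), e(x ∨ y) = e(x) ∨ e(y), e(x ∧ y) = e(x) ∧ e(y). Then there exist an integral residuated lattice D and injective maps h : B → D and k : C → D, each preserving ∨, ∧, ·, \, / and 1, such that h(x) = k(e(x)) for all x ∈ F, h(B) ∪ k(C) = D, h(B) ∩ k(C) = h(F), and h(b) < k(c) < k(g) for all b ∈ B∖F, c ∈ C∖G, g ∈ G. -/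
namespace IRL

section basics
variable {α : Type*} [IRL α]

theorem glue_mul_mono_left {x y : α} (w : α) (h : x ≤ y) : w * x ≤ w * y :=
  (mul_le_iff_ld _ _ _).2 (h.trans ((mul_le_iff_ld _ _ _).1 le_rfl))

theorem glue_mul_mono_right {x y : α} (w : α) (h : x ≤ y) : x * w ≤ y * w :=
  (mul_le_iff_rd _ _ _).2 (h.trans ((mul_le_iff_rd _ _ _).1 le_rfl))

theorem glue_mul_le_left (x y : α) : x * y ≤ x := by
  simpa using glue_mul_mono_left x (le_one y)

theorem glue_mul_le_right (x y : α) : x * y ≤ y := by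
  simpa using glue_mul_mono_right y (le_one x)

theorem glue_ld_mul (x y : α) : x * ld x y ≤ y := (mul_le_iff_ld _ _ _).2 le_rfl

theorem glue_rd_mul (x y : α) : rd y x * x ≤ y := (mul_le_iff_rd _ _ _).2 le_rfl

theorem glue_ld_one {x y : α} (h : x ≤ y) : ld x y = 1 :=
  le_antisymm (le_one _) ((mul_le_iff_ld _ _ _).1 (by simpa using h))

theorem glue_rd_one {x y : α} (h : x ≤ y) : rd y x = 1 :=
  le_antisymm (le_one _) ((mul_le_iff_rd _ _ _).1 (by simpa using h))

variable {F : Set α}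

theorem IsCongFilter.one_mem (hF : IsCongFilter F) : (1 : α) ∈ F := by
  obtain ⟨x, hx⟩ := hF.nonempty
  exact hF.upward x hx 1 (le_one x)

theorem IsCongFilter.ldI (hF : IsCongFilter F) {x z f : α} (hf : f ∈ F) (h : x * f ≤ z) : ld x z ∈ F :=
  hF.upward f hf _ ((mul_le_iff_ld _ _ _).1 h)

theorem IsCongFilter.ldE (_hF : IsCongFilter F) {x z : α} (h : ld x z ∈ F) : ∃ f ∈ F, x * f ≤ z :=
  ⟨_, h, glue_ld_mul _ _⟩

theorem IsCongFilter.ldI' (hF : IsCongFilter F) {x z f : α} (hf : f ∈ F) (h : f * x ≤ z) : ld x z ∈ F :=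
  hF.upward _ (hF.conjL f hf x) _
    ((mul_le_iff_ld _ _ _).1 ((glue_ld_mul _ _).trans h))

theorem IsCongFilter.ld_iff_rd (hF : IsCongFilter F) {x z : α} : ld x z ∈ F ↔ rd z x ∈ F := by
  constructor
  · intro h
    exact hF.upward _ (hF.conjR _ h x) _
      ((mul_le_iff_rd _ _ _).1 ((glue_rd_mul _ _).trans (glue_ld_mul _ _)))
  · intro h
    exact hF.ldI' h (glue_rd_mul _ _)

theorem IsCongFilter.ldE' (hF : IsCongFilter F) {x z : α} (h : ld x z ∈ F) : ∃ f ∈ F, f * x ≤ z :=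
  ⟨_, hF.ld_iff_rd.1 h, glue_rd_mul _ _⟩

theorem IsCongFilter.ld_of_le (hF : IsCongFilter F) {x z : α} (h : x ≤ z) : ld x z ∈ F :=
  hF.ldI hF.one_mem (by simpa using h)

theorem IsCongFilter.ld_trans (hF : IsCongFilter F) {x y z : α} (h : ld x y ∈ F) (h' : ld y z ∈ F) : ld x z ∈ F := by
  obtain ⟨f, hf, h1⟩ := hF.ldE h
  obtain ⟨g, hg, h2⟩ := hF.ldE h'
  refine hF.ldI (hF.mul_mem _ hf _ hg) ?_
  rw [← mul_assoc]
  exact (glue_mul_mono_right _ h1).trans h2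

theorem IsCongFilter.ld_mul_left (hF : IsCongFilter F) {x z : α} (w : α) (h : ld x z ∈ F) :
    ld (w * x) (w * z) ∈ F := by
  obtain ⟨f, hf, h1⟩ := hF.ldE h
  refine hF.ldI hf ?_
  rw [mul_assoc]
  exact glue_mul_mono_left _ h1

theorem IsCongFilter.ld_mul_right (hF : IsCongFilter F) {x z : α} (w : α) (h : ld x z ∈ F) :
    ld (x * w) (z * w) ∈ F := by
  obtain ⟨f, hf, h1⟩ := hF.ldE' h
  refine hF.ldI' hf ?_
  rw [← mul_assoc]
  exact glue_mul_mono_right _ h1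

theorem IsCongFilter.ld_mp (hF : IsCongFilter F) {x z : α} (h : ld x z ∈ F) (hx : x ∈ F) : z ∈ F :=
  hF.upward _ (hF.mul_mem _ hx _ h) _ (glue_ld_mul _ _)

theorem IsCongFilter.not_mul_left (hF : IsCongFilter F) {x : α} (w : α) (h : x ∉ F) : w * x ∉ F :=
  fun h' => h (hF.upward _ h' _ (glue_mul_le_right _ _))

theorem IsCongFilter.not_mul_right (hF : IsCongFilter F) {x : α} (w : α) (h : x ∉ F) : x * w ∉ F :=
  fun h' => h (hF.upward _ h' _ (glue_mul_le_left _ _))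

theorem IsCongFilter.sigma_le_iff (hF : IsCongFilter F) {σ : α → α} (hσ : ∀ x, x ∉ F → IsLeast (cls F x) (σ x))
    {x : α} (hx : x ∉ F) (z : α) : σ x ≤ z ↔ ld x z ∈ F := by
  constructor
  · intro h
    exact hF.ld_trans (hσ x hx).1.1 (hF.ld_of_le h)
  · intro h
    obtain ⟨f, hf, h1⟩ := hF.ldE h
    have : theta F x (x ⊓ z) :=
      ⟨hF.ldI hf (le_inf (glue_mul_le_left _ _) h1), hF.ld_of_le inf_le_left⟩
    exact ((hσ x hx).2 this).trans inf_le_right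

theorem IsCongFilter.le_gamma_iff (hF : IsCongFilter F) {γ : α → α} (hγ : ∀ x, x ∉ F → IsGreatest (cls F x) (γ x))
    {z : α} (hz : z ∉ F) (y : α) : y ≤ γ z ↔ ld y z ∈ F := by
  constructor
  · intro h
    exact hF.ld_trans (hF.ld_of_le h) (hγ z hz).1.2
  · intro h
    obtain ⟨f, hf, h1⟩ := hF.ldE h
    have : theta F z (y ⊔ z) :=
      ⟨hF.ld_of_le le_sup_right, hF.ldI hf ((mul_le_iff_rd _ _ _).2
        (sup_le ((mul_le_iff_rd _ _ _).1 h1)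
          ((mul_le_iff_rd _ _ _).1 (glue_mul_le_left _ _))))⟩
    exact le_sup_left.trans ((hγ z hz).2 this)

theorem IsCongFilter.not_gamma (hF : IsCongFilter F) {γ : α → α} (hγ : ∀ x, x ∉ F → IsGreatest (cls F x) (γ x))
    {z : α} (hz : z ∉ F) : γ z ∉ F :=
  fun h => hz (hF.ld_mp (hγ z hz).1.2 h)

theorem IsCongFilter.sigma_le (hF : IsCongFilter F) {σ : α → α} (hσ : ∀ x, x ∉ F → IsLeast (cls F x) (σ x))
    {x : α} (hx : x ∉ F) : σ x ≤ x :=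
  (hF.sigma_le_iff hσ hx x).2 (hF.ld_of_le le_rfl)

theorem IsCongFilter.not_sigma (hF : IsCongFilter F) {σ : α → α} (hσ : ∀ x, x ∉ F → IsLeast (cls F x) (σ x))
    {x : α} (hx : x ∉ F) : σ x ∉ F :=
  fun h => hx (hF.upward _ h _ (hF.sigma_le hσ hx))

theorem IsCongFilter.sigma_congr (hF : IsCongFilter F) {σ : α → α} (hσ : ∀ x, x ∉ F → IsLeast (cls F x) (σ x))
    {x y : α} (hx : x ∉ F) (hy : y ∉ F) (h : ld x y ∈ F) (h' : ld y x ∈ F) : σ x = σ y :=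
  le_antisymm
    ((hF.sigma_le_iff hσ hx _).2 (hF.ld_trans h (hσ y hy).1.1))
    ((hF.sigma_le_iff hσ hy _).2 (hF.ld_trans h' (hσ x hx).1.1))

theorem IsCongFilter.sigma_sigma (hF : IsCongFilter F) {σ : α → α} (hσ : ∀ x, x ∉ F → IsLeast (cls F x) (σ x))
    {x : α} (hx : x ∉ F) : σ (σ x) = σ x :=
  hF.sigma_congr hσ (hF.not_sigma hσ hx) hx (hσ x hx).1.2 (hσ x hx).1.1

theorem IsCongFilter.sigma_mul_mem (hF : IsCongFilter F) {σ : α → α} (hσ : ∀ x, x ∉ F → IsLeast (cls F x) (σ x))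
    {x f : α} (hx : x ∉ F) (hf : f ∈ F) : σ (x * f) = σ x :=
  hF.sigma_congr hσ (hF.not_mul_right _ hx) hx (hF.ld_of_le (glue_mul_le_left _ _))
    (hF.ldI hf le_rfl)

theorem IsCongFilter.sigma_mem_mul (hF : IsCongFilter F) {σ : α → α} (hσ : ∀ x, x ∉ F → IsLeast (cls F x) (σ x))
    {x f : α} (hx : x ∉ F) (hf : f ∈ F) : σ (f * x) = σ x :=
  hF.sigma_congr hσ (hF.not_mul_left _ hx) hx (hF.ld_of_le (glue_mul_le_right _ _))
    (hF.ldI' hf le_rfl)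

theorem IsCongFilter.sigma_mul_mem' (hF : IsCongFilter F) {σ : α → α} (hσ : ∀ x, x ∉ F → IsLeast (cls F x) (σ x))
    {x f : α} (hx : x ∉ F) (hf : f ∈ F) : σ x * f = σ x :=
  le_antisymm (glue_mul_le_left _ _) ((hF.sigma_le_iff hσ hx _).2
    (hF.ld_trans (hσ x hx).1.1 (hF.ldI hf le_rfl)))

theorem IsCongFilter.sigma_mem_mul' (hF : IsCongFilter F) {σ : α → α} (hσ : ∀ x, x ∉ F → IsLeast (cls F x) (σ x))
    {x f : α} (hx : x ∉ F) (hf : f ∈ F) : f * σ x = σ x :=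
  le_antisymm (glue_mul_le_right _ _) ((hF.sigma_le_iff hσ hx _).2
    (hF.ld_trans (hσ x hx).1.1 (hF.ldI' hf le_rfl)))

theorem IsCongFilter.mul_sigma (hF : IsCongFilter F) {σ : α → α} (hσ : ∀ x, x ∉ F → IsLeast (cls F x) (σ x))
    {b x : α} (hx : x ∉ F) (h : ∃ u : α, u ∉ F ∧ b * σ x = σ u) :
    b * σ x = σ (b * x) := by
  obtain ⟨u, hu, h⟩ := h
  rw [h, ← hF.sigma_sigma hσ hu, ← h]
  exact hF.sigma_congr hσ (hF.not_mul_left _ (hF.not_sigma hσ hx)) (hF.not_mul_left _ hx)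
    (hF.ld_mul_left _ (hσ x hx).1.2) (hF.ld_mul_left _ (hσ x hx).1.1)

theorem IsCongFilter.sigma_mul (hF : IsCongFilter F) {σ : α → α} (hσ : ∀ x, x ∉ F → IsLeast (cls F x) (σ x))
    {b x : α} (hx : x ∉ F) (h : ∃ u : α, u ∉ F ∧ σ x * b = σ u) :
    σ x * b = σ (x * b) := by
  obtain ⟨u, hu, h⟩ := h
  rw [h, ← hF.sigma_sigma hσ hu, ← h]
  exact hF.sigma_congr hσ (hF.not_mul_right _ (hF.not_sigma hσ hx)) (hF.not_mul_right _ hx)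
    (hF.ld_mul_right _ (hσ x hx).1.2) (hF.ld_mul_right _ (hσ x hx).1.1)

end basics

/-- The disjoint union of a lower part `X` and an upper part `C`. -/
inductive Glue (X C : Type) : Type
  | lo : X → Glue X C
  | hi : C → Glue X C

namespace Glue
variable {X C : Type}

/-- Ordinal sum order. -/
def le [LE X] [LE C] : Glue X C → Glue X C → Prop
  | lo a, lo b => a ≤ b
  | lo _, hi _ => True
  | hi _, lo _ => False
  | hi a, hi b => a ≤ b

/-- Join in the ordinal sum. -/
def sup [Max X] [Max C] : Glue X C → Glue X C → Glue X C
  | lo a, lo b => lo (a ⊔ b)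
  | lo _, hi b => hi b
  | hi a, lo _ => hi a
  | hi a, hi b => hi (a ⊔ b)

/-- Meet in the ordinal sum. -/
def inf [Min X] [Min C] : Glue X C → Glue X C → Glue X C
  | lo a, lo b => lo (a ⊓ b)
  | lo a, hi _ => lo a
  | hi _, lo b => lo b
  | hi a, hi b => hi (a ⊓ b)

instance lattice [Lattice X] [Lattice C] : Lattice (Glue X C) where
  le := le
  sup := sup
  inf := inf
  le_refl := by rintro (a | a) <;> simp [le]
  le_trans := by
    rintro (a | a) (b | b) (c | c) <;> simp only [le] <;> intro h h' <;>
      first | trivial | exact h.elim | exact h'.elim | exact h.trans h'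
  le_antisymm := by
    rintro (a | a) (b | b) <;> simp only [le] <;> intro h h' <;>
      first | exact h.elim | exact h'.elim | rw [le_antisymm h h']
  le_sup_left := by rintro (a | a) (b | b) <;> simp [le, sup]
  le_sup_right := by rintro (a | a) (b | b) <;> simp [le, sup]
  sup_le := by rintro (a | a) (b | b) (c | c) <;> simp +contextual [le, sup]
  inf_le_left := by rintro (a | a) (b | b) <;> simp [le, inf]
  inf_le_right := by rintro (a | a) (b | b) <;> simp [le, inf]
  le_inf := by rintro (a | a) (b | b) (c | c) <;> simp +contextual [le, inf]

end Glue

/-- Abstract gluing data. -/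
structure GlueData (X C : Type) [Lattice X] [IRL C] where
  mul : X → X → X
  L : C → X → X
  R : X → C → X
  ldXX : X → X → Glue X C
  rdXX : X → X → Glue X C
  ldC : C → X → X
  rdC : X → C → X
  assoc : ∀ x y z, mul (mul x y) z = mul x (mul y z)
  assoc1 : ∀ x y c, R (mul x y) c = mul x (R y c)
  assoc2 : ∀ x c y, mul (R x c) y = mul x (L c y)
  assoc3 : ∀ c x y, mul (L c x) y = L c (mul x y)
  assoc4 : ∀ x c d, R (R x c) d = R x (c * d)
  assoc5 : ∀ c x d, R (L c x) d = L c (R x d)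
  assoc6 : ∀ c d x, L (c * d) x = L c (L d x)
  L_one : ∀ x, L 1 x = x
  R_one : ∀ x, R x 1 = x
  ld1 : ∀ x y z, mul x y ≤ z ↔ Glue.lo y ≤ ldXX x z
  ld2 : ∀ x c z, R x c ≤ z ↔ Glue.hi c ≤ ldXX x z
  ld3 : ∀ c y z, L c y ≤ z ↔ y ≤ ldC c z
  rd1 : ∀ x y z, mul x y ≤ z ↔ Glue.lo x ≤ rdXX z y
  rd2 : ∀ c y z, L c y ≤ z ↔ Glue.hi c ≤ rdXX z y
  rd3 : ∀ x c z, R x c ≤ z ↔ x ≤ rdC z c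

namespace GlueData
variable {X C : Type} [Lattice X] [IRL C] (d : GlueData X C)

/-- Product of the gluing. -/
def gmul : Glue X C → Glue X C → Glue X C
  | .lo a, .lo b => .lo (d.mul a b)
  | .lo a, .hi b => .lo (d.R a b)
  | .hi a, .lo b => .lo (d.L a b)
  | .hi a, .hi b => .hi (a * b)

/-- Left division of the gluing. -/
def gld : Glue X C → Glue X C → Glue X C
  | .lo a, .lo b => d.ldXX a b
  | .lo _, .hi _ => .hi 1
  | .hi a, .lo b => .lo (d.ldC a b)
  | .hi a, .hi b => .hi (ld a b)

/-- Right division of the gluing. -/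
def grd : Glue X C → Glue X C → Glue X C
  | .lo a, .lo b => d.rdXX a b
  | .hi _, .lo _ => .hi 1
  | .lo a, .hi b => .lo (d.rdC a b)
  | .hi a, .hi b => .hi (rd a b)

/-- The glued integral residuated lattice. -/
@[reducible] def irl : IRL (Glue X C) :=
  { (Glue.lattice : Lattice (Glue X C)) with
    mul := d.gmul
    one := .hi 1
    mul_assoc := by
      rintro (a | a) (b | b) (c | c)
      · exact congrArg Glue.lo (d.assoc _ _ _)
      · exact congrArg Glue.lo (d.assoc1 _ _ _)
      · exact congrArg Glue.lo (d.assoc2 _ _ _)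
      · exact congrArg Glue.lo (d.assoc4 _ _ _)
      · exact congrArg Glue.lo (d.assoc3 _ _ _)
      · exact congrArg Glue.lo (d.assoc5 _ _ _)
      · exact congrArg Glue.lo (d.assoc6 _ _ _)
      · exact congrArg Glue.hi (mul_assoc _ _ _)
    one_mul := by
      rintro (a | a)
      · exact congrArg Glue.lo (d.L_one _)
      · exact congrArg Glue.hi (one_mul _)
    mul_one := by
      rintro (a | a)
      · exact congrArg Glue.lo (d.R_one _)
      · exact congrArg Glue.hi (mul_one _)
    ld := d.gld
    rd := d.grd
    mul_le_iff_ld := by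
      rintro (a | a) (b | b) (c | c)
      · exact d.ld1 _ _ _
      · exact ⟨fun _ => trivial, fun _ => trivial⟩
      · exact d.ld2 _ _ _
      · exact ⟨fun _ => le_one b, fun _ => trivial⟩
      · exact d.ld3 _ _ _
      · exact ⟨fun _ => trivial, fun _ => trivial⟩
      · exact ⟨fun h => False.elim h, fun h => False.elim h⟩
      · exact IRL.mul_le_iff_ld a b c
    mul_le_iff_rd := by
      rintro (a | a) (b | b) (c | c)
      · exact d.rd1 _ _ _
      · exact ⟨fun _ => trivial, fun _ => trivial⟩
      · exact d.rd3 _ _ _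
      · exact ⟨fun _ => trivial, fun _ => trivial⟩
      · exact d.rd2 _ _ _
      · exact ⟨fun _ => le_one a, fun _ => trivial⟩
      · exact ⟨fun h => False.elim h, fun h => False.elim h⟩
      · exact IRL.mul_le_iff_rd a b c
    le_one := by
      rintro (a | a)
      · trivial
      · exact le_one a }

end GlueData
end IRL


/-- existence of the gluing over a filter (strong amalgamation over a
common filter). Given an IRL `B` with a compatible congruence filter `F` such that
`B ∖ F` is closed under joins, an IRL `C` with a congruence filter `G` lying strictly
above `C ∖ G`, and an isomorphism `e` from `F` onto `G`, there exist an IRL `D` and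
embeddings `h : B → D`, `k : C → D` agreeing on `F` (via `e`), whose images cover `D`
and intersect exactly in `h(F)`, and with `h(b) < k(c) < k(g)` for `b ∈ B∖F`,
`c ∈ C∖G`, `g ∈ G`. -/
theorem gluing_over_filter_exists (B : Type) [IRL B] (C : Type) [IRL C]
    (F : Set B) (hF : IRL.IsCongFilter F)
    (σ γ : B → B)
    (hstrict : ∀ f ∈ F, ∀ b : B, b ∉ F → b < f)
    (hσ : ∀ x : B, x ∉ F → IsLeast (IRL.cls F x) (σ x))
    (hγ : ∀ x : B, x ∉ F → IsGreatest (IRL.cls F x) (γ x))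
    (habs : ∀ b : B, b ∉ F → ∀ x : B, x ∉ F →
      (∃ u : B, u ∉ F ∧ b * σ x = σ u) ∧ (∃ v : B, v ∉ F ∧ σ x * b = σ v))
    (hjoin : ∀ x : B, x ∉ F → ∀ y : B, y ∉ F → x ⊔ y ∉ F)
    (G : Set C) (hG : IRL.IsCongFilter G)
    (hCG : ∀ c : C, c ∉ G → ∀ g ∈ G, c < g)
    (e : B → C)
    (einj : ∀ x ∈ F, ∀ y ∈ F, e x = e y → x = y)
    (eimg : e '' F = G)
    (eone : e 1 = 1)
    (emul : ∀ x ∈ F, ∀ y ∈ F, e (x * y) = e x * e y)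
    (eld : ∀ x ∈ F, ∀ y ∈ F, e (IRL.ld x y) = IRL.ld (e x) (e y))
    (erd : ∀ x ∈ F, ∀ y ∈ F, e (IRL.rd x y) = IRL.rd (e x) (e y))
    (esup : ∀ x ∈ F, ∀ y ∈ F, e (x ⊔ y) = e x ⊔ e y)
    (einf : ∀ x ∈ F, ∀ y ∈ F, e (x ⊓ y) = e x ⊓ e y) :
    ∃ (D : Type) (_ : IRL D) (h : B → D) (k : C → D),
      Function.Injective h ∧ Function.Injective k ∧
      (∀ x y : B, h (x ⊔ y) = h x ⊔ h y) ∧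
      (∀ x y : B, h (x ⊓ y) = h x ⊓ h y) ∧
      (∀ x y : B, h (x * y) = h x * h y) ∧
      (∀ x y : B, h (IRL.ld x y) = IRL.ld (h x) (h y)) ∧
      (∀ x y : B, h (IRL.rd x y) = IRL.rd (h x) (h y)) ∧
      h 1 = 1 ∧
      (∀ x y : C, k (x ⊔ y) = k x ⊔ k y) ∧
      (∀ x y : C, k (x ⊓ y) = k x ⊓ k y) ∧
      (∀ x y : C, k (x * y) = k x * k y) ∧
      (∀ x y : C, k (IRL.ld x y) = IRL.ld (k x) (k y)) ∧
      (∀ x y : C, k (IRL.rd x y) = IRL.rd (k x) (k y)) ∧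
      k 1 = 1 ∧
      (∀ x ∈ F, h x = k (e x)) ∧
      Set.range h ∪ Set.range k = Set.univ ∧
      Set.range h ∩ Set.range k = h '' F ∧
      (∀ b : B, b ∉ F → ∀ c : C, c ∉ G → h b < k c) ∧
      (∀ c : C, c ∉ G → ∀ g ∈ G, k c < k g) := by
  classical
  have hd : ∀ c : C, ∃ b : B, c ∈ G → b ∈ F ∧ e b = c := by
    intro c
    by_cases hc : c ∈ G
    · rw [← eimg] at hc
      obtain ⟨b, hb, hbc⟩ := hc
      exact ⟨b, fun _ => ⟨hb, hbc⟩⟩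
    · exact ⟨1, fun h => (hc h).elim⟩
  choose d hd using hd
  have hdF : ∀ c ∈ G, d c ∈ F := fun c hc => (hd c hc).1
  have hed : ∀ c ∈ G, e (d c) = c := fun c hc => (hd c hc).2
  have heG : ∀ b ∈ F, e b ∈ G := fun b hb => eimg ▸ Set.mem_image_of_mem e hb
  have hde : ∀ b ∈ F, d (e b) = b := fun b hb =>
    einj _ (hdF _ (heG b hb)) _ hb (hed _ (heG b hb))
  have hdmul : ∀ c ∈ G, ∀ c' ∈ G, d (c * c') = d c * d c' := by
    intro c hc c' hc'
    refine einj _ (hdF _ (hG.mul_mem _ hc _ hc')) _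
      (hF.mul_mem _ (hdF c hc) _ (hdF c' hc')) ?_
    rw [hed _ (hG.mul_mem _ hc _ hc'), emul _ (hdF c hc) _ (hdF c' hc'), hed c hc, hed c' hc']
  have hd1 : d 1 = 1 := by
    rw [← eone]; exact hde 1 hF.one_mem
  have hele : ∀ x ∈ F, ∀ y ∈ F, (e x ≤ e y ↔ x ≤ y) := by
    intro x hx y hy
    rw [← sup_eq_right, ← sup_eq_right, ← esup x hx y hy]
    exact ⟨fun h => einj _ (hF.upward x hx _ le_sup_left) _ hy h, fun h => by rw [h]⟩
  have hGmul : ∀ c c' : C, c * c' ∈ G ↔ c ∈ G ∧ c' ∈ G := fun c c' =>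
    ⟨fun h => ⟨hG.upward _ h _ (IRL.glue_mul_le_left _ _),
      hG.upward _ h _ (IRL.glue_mul_le_right _ _)⟩, fun h => hG.mul_mem _ h.1 _ h.2⟩
  have hms : ∀ b, b ∉ F → ∀ x, x ∉ F → b * σ x = σ (b * x) := fun b hb x hx =>
    hF.mul_sigma hσ hx (habs b hb x hx).1
  have hsm : ∀ b, b ∉ F → ∀ x, x ∉ F → σ x * b = σ (x * b) := fun b hb x hx =>
    hF.sigma_mul hσ hx (habs b hb x hx).2
  let latX : Lattice {b : B // b ∉ F} := Subtype.lattice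
    (fun {x y} hx hy => hjoin x hx y hy)
    (fun {x y} hx _ h => hx (hF.upward _ h _ inf_le_left))
  let h : B → IRL.Glue {b : B // b ∉ F} C := fun b =>
    if hb : b ∈ F then .hi (e b) else .lo ⟨b, hb⟩
  have hh1 : ∀ b, b ∈ F → h b = .hi (e b) := fun b hb => dif_pos hb
  have hh2 : ∀ b, ∀ hb : b ∉ F, h b = .lo ⟨b, hb⟩ := fun b hb => dif_neg hb
  have lo_le : ∀ (y : {b : B // b ∉ F}) (b : B), IRL.Glue.lo y ≤ h b ↔ y.1 ≤ b := by
    intro y b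
    by_cases hb : b ∈ F
    · rw [hh1 b hb]
      exact ⟨fun _ => (hstrict b hb _ y.2).le, fun _ => trivial⟩
    · rw [hh2 b hb]
      exact Iff.rfl
  have hi_le : ∀ (c : C) (b : B), (IRL.Glue.hi c : IRL.Glue {b : B // b ∉ F} C) ≤ h b ↔
      b ∈ F ∧ (c ∈ G → d c ≤ b) := by
    intro c b
    by_cases hb : b ∈ F
    · rw [hh1 b hb]
      change c ≤ e b ↔ _
      by_cases hc : c ∈ G
      · have := hele _ (hdF c hc) _ hb
        rw [hed c hc] at this
        simp [this, hb, hc]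
      · simp [hb, hc, (hCG c hc _ (heG b hb)).le]
    · rw [hh2 b hb]
      exact ⟨fun h => False.elim h, fun h => hb h.1⟩
  have hldF : ∀ f ∈ F, ∀ z, z ∉ F → IRL.ld f z ∉ F := fun f hf z hz h =>
    hz (hF.ld_mp h hf)
  have hrdF : ∀ f ∈ F, ∀ z, z ∉ F → IRL.rd z f ∉ F := fun f hf z hz h =>
    hldF f hf z hz (hF.ld_iff_rd.2 h)
  let D : IRL.GlueData {b : B // b ∉ F} C :=
  { mul := fun x y => ⟨x.1 * y.1, hF.not_mul_left _ y.2⟩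
    L := fun c x => if c ∈ G then ⟨d c * x.1, hF.not_mul_left _ x.2⟩
      else ⟨σ x.1, hF.not_sigma hσ x.2⟩
    R := fun x c => if c ∈ G then ⟨x.1 * d c, hF.not_mul_right _ x.2⟩
      else ⟨σ x.1, hF.not_sigma hσ x.2⟩
    ldXX := fun x z => h (IRL.ld x.1 z.1)
    rdXX := fun z y => h (IRL.rd z.1 y.1)
    ldC := fun c z => if hc : c ∈ G then ⟨IRL.ld (d c) z.1, hldF _ (hdF c hc) _ z.2⟩
      else ⟨γ z.1, hF.not_gamma hγ z.2⟩
    rdC := fun z c => if hc : c ∈ G then ⟨IRL.rd z.1 (d c), hrdF _ (hdF c hc) _ z.2⟩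
      else ⟨γ z.1, hF.not_gamma hγ z.2⟩
    assoc := fun x y z => Subtype.ext (mul_assoc _ _ _)
    assoc1 := by
      rintro ⟨x, hx⟩ ⟨y, hy⟩ c
      by_cases hc : c ∈ G
      · simp [hc, mul_assoc]
      · simp [hc, hms x hx y hy]
    assoc2 := by
      rintro ⟨x, hx⟩ c ⟨y, hy⟩
      by_cases hc : c ∈ G
      · simp [hc, mul_assoc]
      · simp [hc, hms x hx y hy, hsm y hy x hx]
    assoc3 := by
      rintro c ⟨x, hx⟩ ⟨y, hy⟩
      by_cases hc : c ∈ G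
      · simp [hc, mul_assoc]
      · simp [hc, hsm y hy x hx]
    assoc4 := by
      rintro ⟨x, hx⟩ c c'
      by_cases hc : c ∈ G <;> by_cases hc' : c' ∈ G
      · simp [hc, hc', hGmul, mul_assoc, hdmul c hc c' hc']
      · simp [hc, hc', hGmul, hF.sigma_mul_mem hσ hx (hdF c hc)]
      · simp [hc, hc', hGmul, hF.sigma_mul_mem' hσ hx (hdF c' hc')]
      · simp [hc, hc', hGmul, hF.sigma_sigma hσ hx]
    assoc5 := by
      rintro c ⟨x, hx⟩ c'
      by_cases hc : c ∈ G <;> by_cases hc' : c' ∈ G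
      · simp [hc, hc', mul_assoc]
      · simp [hc, hc', hF.sigma_mem_mul hσ hx (hdF c hc), hF.sigma_mem_mul' hσ hx (hdF c hc)]
      · simp [hc, hc', hF.sigma_mul_mem hσ hx (hdF c' hc'),
          hF.sigma_mul_mem' hσ hx (hdF c' hc')]
      · simp [hc, hc']
    assoc6 := by
      rintro c c' ⟨x, hx⟩
      by_cases hc : c ∈ G <;> by_cases hc' : c' ∈ G
      · simp [hc, hc', hGmul, mul_assoc, hdmul c hc c' hc']
      · simp [hc, hc', hGmul, hF.sigma_mem_mul' hσ hx (hdF c hc)]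
      · simp [hc, hc', hGmul, hF.sigma_mem_mul hσ hx (hdF c' hc')]
      · simp [hc, hc', hGmul, hF.sigma_sigma hσ hx]
    L_one := by
      rintro ⟨x, hx⟩
      simp [hG.one_mem, hd1]
    R_one := by
      rintro ⟨x, hx⟩
      simp [hG.one_mem, hd1]
    ld1 := by
      intro x y z
      rw [lo_le]
      exact IRL.mul_le_iff_ld _ _ _
    ld2 := by
      intro x c z
      rw [hi_le]
      by_cases hc : c ∈ G
      · simp only [hc, if_true, forall_const]
        refine (IRL.mul_le_iff_ld _ _ _).trans ⟨fun h => ⟨hF.upward _ (hdF c hc) _ h, h⟩, And.right⟩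
      · simp only [hc, if_false, false_imp_iff, and_true]
        exact hF.sigma_le_iff hσ x.2 z.1
    ld3 := by
      intro c y z
      by_cases hc : c ∈ G
      · simp only [hc, if_true, dif_pos]
        exact IRL.mul_le_iff_ld _ _ _
      · simp only [hc, if_false, dif_neg, not_false_eq_true]
        exact (hF.sigma_le_iff hσ y.2 z.1).trans (hF.le_gamma_iff hγ z.2 y.1).symm
    rd1 := by
      intro x y z
      rw [lo_le]
      exact IRL.mul_le_iff_rd _ _ _
    rd2 := by
      intro c x z
      rw [hi_le]
      by_cases hc : c ∈ G
      · simp only [hc, if_true, forall_const]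
        refine (IRL.mul_le_iff_rd _ _ _).trans ⟨fun h => ⟨hF.upward _ (hdF c hc) _ h, h⟩, And.right⟩
      · simp only [hc, if_false, false_imp_iff, and_true]
        exact (hF.sigma_le_iff hσ x.2 z.1).trans hF.ld_iff_rd
    rd3 := by
      intro y c z
      by_cases hc : c ∈ G
      · simp only [hc, if_true, dif_pos]
        exact IRL.mul_le_iff_rd _ _ _
      · simp only [hc, if_false, dif_neg, not_false_eq_true]
        exact (hF.sigma_le_iff hσ y.2 z.1).trans (hF.le_gamma_iff hγ z.2 y.1).symm }
  refine ⟨IRL.Glue {b : B // b ∉ F} C, D.irl, h, IRL.Glue.hi, ?_, ?_, ?_, ?_, ?_, ?_, ?_, ?_,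
    fun _ _ => rfl, fun _ _ => rfl, fun _ _ => rfl, fun _ _ => rfl, fun _ _ => rfl, rfl,
    hh1, ?_, ?_, ?_, ?_⟩
  · intro x y hxy
    by_cases hx : x ∈ F <;> by_cases hy : y ∈ F
    · rw [hh1 x hx, hh1 y hy] at hxy
      exact einj x hx y hy (IRL.Glue.hi.inj hxy)
    · rw [hh1 x hx, hh2 y hy] at hxy
      cases hxy
    · rw [hh2 x hx, hh1 y hy] at hxy
      cases hxy
    · rw [hh2 x hx, hh2 y hy] at hxy
      exact congrArg Subtype.val (IRL.Glue.lo.inj hxy)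
  · intro x y hxy
    exact IRL.Glue.hi.inj hxy
  · intro x y
    by_cases hx : x ∈ F <;> by_cases hy : y ∈ F
    · rw [hh1 x hx, hh1 y hy, hh1 _ (hF.upward x hx _ le_sup_left), esup x hx y hy]; rfl
    · rw [sup_eq_left.2 (hstrict x hx y hy).le, hh1 x hx, hh2 y hy]; rfl
    · rw [sup_eq_right.2 (hstrict y hy x hx).le, hh2 x hx, hh1 y hy]; rfl
    · rw [hh2 x hx, hh2 y hy, hh2 _ (hjoin x hx y hy)]; rfl
  · intro x y
    by_cases hx : x ∈ F <;> by_cases hy : y ∈ F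
    · have : x ⊓ y ∈ F := hF.upward _ (hF.mul_mem x hx y hy) _
        (le_inf (IRL.glue_mul_le_left _ _) (IRL.glue_mul_le_right _ _))
      rw [hh1 x hx, hh1 y hy, hh1 _ this, einf x hx y hy]; rfl
    · rw [inf_eq_right.2 (hstrict x hx y hy).le, hh1 x hx, hh2 y hy]; rfl
    · rw [inf_eq_left.2 (hstrict y hy x hx).le, hh2 x hx, hh1 y hy]; rfl
    · rw [hh2 x hx, hh2 y hy, hh2 _ (fun h => hx (hF.upward _ h _ inf_le_left))]; rfl
  · intro x y
    by_cases hx : x ∈ F <;> by_cases hy : y ∈ F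
    · rw [hh1 x hx, hh1 y hy, hh1 _ (hF.mul_mem x hx y hy), emul x hx y hy]; rfl
    · rw [hh1 x hx, hh2 y hy, hh2 _ (hF.not_mul_left _ hy)]
      change _ = IRL.Glue.lo (if e x ∈ G then _ else _)
      rw [if_pos (heG x hx)]
      simp only [hde x hx]
    · rw [hh2 x hx, hh1 y hy, hh2 _ (hF.not_mul_right _ hx)]
      change _ = IRL.Glue.lo (if e y ∈ G then _ else _)
      rw [if_pos (heG y hy)]
      simp only [hde y hy]
    · rw [hh2 x hx, hh2 y hy, hh2 _ (hF.not_mul_left _ hy)]; rfl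
  · intro x y
    by_cases hx : x ∈ F <;> by_cases hy : y ∈ F
    · rw [hh1 x hx, hh1 y hy, hh1 _ (hF.upward y hy _
        ((IRL.mul_le_iff_ld _ _ _).1 (IRL.glue_mul_le_right _ _))), eld x hx y hy]; rfl
    · rw [hh1 x hx, hh2 y hy, hh2 _ (hldF x hx y hy)]
      change _ = IRL.Glue.lo (dite (e x ∈ G) _ _)
      rw [dif_pos (heG x hx)]
      simp only [hde x hx]
    · rw [IRL.glue_ld_one (hstrict y hy x hx).le, hh2 x hx, hh1 y hy, hh1 1 hF.one_mem, eone]; rfl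
    · rw [hh2 x hx, hh2 y hy]; rfl
  · intro x y
    by_cases hx : x ∈ F <;> by_cases hy : y ∈ F
    · rw [hh1 x hx, hh1 y hy, hh1 _ (hF.upward x hx _
        ((IRL.mul_le_iff_rd _ _ _).1 (IRL.glue_mul_le_left _ _))), erd x hx y hy]; rfl
    · rw [IRL.glue_rd_one (hstrict x hx y hy).le, hh1 x hx, hh2 y hy, hh1 1 hF.one_mem, eone]; rfl
    · rw [hh2 x hx, hh1 y hy, hh2 _ (hrdF y hy x hx)]
      change _ = IRL.Glue.lo (dite (e y ∈ G) _ _)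
      rw [dif_pos (heG y hy)]
      simp only [hde y hy]
    · rw [hh2 x hx, hh2 y hy]; rfl
  · rw [hh1 1 hF.one_mem, eone]; rfl
  · refine Set.eq_univ_of_forall ?_
    rintro (⟨x, hx⟩ | c)
    · exact Or.inl ⟨x, hh2 x hx⟩
    · exact Or.inr ⟨c, rfl⟩
  · ext w
    constructor
    · rintro ⟨⟨b, rfl⟩, c, hc⟩
      by_cases hb : b ∈ F
      · exact ⟨b, hb, rfl⟩
      · rw [hh2 b hb] at hc
        cases hc
    · rintro ⟨b, hb, rfl⟩
      exact ⟨⟨b, rfl⟩, e b, (hh1 b hb).symm⟩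
  · intro b hb c _
    rw [hh2 b hb]
    exact lt_of_le_not_ge (show IRL.Glue.le _ _ from trivial) (fun h => False.elim h)
  · intro c hc g hg
    have := hCG c hc g hg
    exact lt_of_le_not_ge (show c ≤ g from this.le) (fun h => this.not_ge h)
end

section
/- Let D be a gluing of B and C over F and I. Then for every c ∈ C⁻ := C∖(F ∪ I) and every f ∈ F, both c·f and f·c belong to C⁻ (in particular c·f ∉ I and f·c ∉ I). -/
/-- A gluing of `B` and `C` over a congruence filter `F` and a lattice ideal `I`,
with `B ∩ C = F ∪ I`. -/
structure GluingOverFI {D : Type*} [IRL D] (B C F I : Set D) : Prop where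
  union_eq : B ∪ C = Set.univ
  inter_eq : B ∩ C = F ∪ I
  filt : IRL.IsCongFilter F
  one_mem : (1 : D) ∈ F
  I_nonempty : I.Nonempty
  I_down : ∀ x ∈ I, ∀ y : D, y ≤ x → y ∈ I
  I_lt : ∀ i ∈ I, ∀ x : D, x ∉ I → i < x
  F_gt : ∀ f ∈ F, ∀ x : D, x ∉ F → x < f
  lt_BC : ∀ b ∈ B \ (F ∪ I), ∀ c ∈ C \ (F ∪ I), b < c
  C_sup : ∀ x ∈ C, ∀ y ∈ C, x ⊔ y ∈ C
  C_mul : ∀ x ∈ C, ∀ y ∈ C, x * y ∈ C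
  C_ld : ∀ x ∈ C, ∀ y ∈ C, IRL.ld x y ∈ C
  C_rd : ∀ x ∈ C, ∀ y ∈ C, IRL.rd x y ∈ C
  B_inf : ∀ x ∈ B, ∀ y ∈ B, x ⊓ y ∈ B
  B_mul : ∀ x ∈ B, ∀ y ∈ B, x * y ∈ B
  B_ld : ∀ x ∈ B, ∀ y ∈ B, IRL.ld x y ∈ B
  B_rd : ∀ x ∈ B, ∀ y ∈ B, IRL.rd x y ∈ B

/-- in a gluing of `B` and `C` over `F` and `I`, for every
`c ∈ C⁻ = C ∖ (F ∪ I)` and `f ∈ F`, both `c·f` and `f·c` belong to `C⁻`. -/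
theorem mul_filter_mem_Cminus {D : Type*} [IRL D] {B C F I : Set D}
    (hg : GluingOverFI B C F I) :
    ∀ c ∈ C \ (F ∪ I), ∀ f ∈ F,
      c * f ∈ C \ (F ∪ I) ∧ f * c ∈ C \ (F ∪ I) := by
  intro c hc f hf
  obtain ⟨hcC, hcn⟩ := hc
  have hcF : c ∉ F := fun h => hcn (Or.inl h)
  have hcI : c ∉ I := fun h => hcn (Or.inr h)
  have hsub : ∀ x, x ∈ F ∪ I → x ∈ B ∧ x ∈ C := by
    intro x hx
    rw [← hg.inter_eq] at hx
    exact hx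
  have hfBC := hsub f (Or.inl hf)
  have h1 : c * f ≤ c := by
    rw [IRL.mul_le_iff_ld]
    exact (IRL.le_one f).trans ((IRL.mul_le_iff_ld c 1 c).1 (mul_one c).le)
  have h2 : f * c ≤ c := by
    rw [IRL.mul_le_iff_rd]
    exact (IRL.le_one f).trans ((IRL.mul_le_iff_rd 1 c c).1 (one_mul c).le)
  refine ⟨⟨hg.C_mul c hcC f hfBC.2, ?_⟩, ⟨hg.C_mul f hfBC.2 c hcC, ?_⟩⟩
  · rintro (h | h)
    · exact hcF (hg.filt.upward _ h _ h1)
    · have hb := hsub _ (Or.inr h)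
      have hm : IRL.rd (c * f) f ∈ F ∪ I := by
        rw [← hg.inter_eq]
        exact ⟨hg.B_rd _ hb.1 _ hfBC.1, hg.C_rd _ hb.2 _ hfBC.2⟩
      rcases hm with hm | hm
      · have h3 := (IRL.mul_le_iff_rd (IRL.rd (c * f) f) f (c * f)).2 le_rfl
        exact hcF (hg.filt.upward _ (hg.filt.mul_mem _ hm _ hf) _ (h3.trans h1))
      · exact hcI (hg.I_down _ hm _ ((IRL.mul_le_iff_rd _ _ _).1 le_rfl))
  · rintro (h | h)
    · exact hcF (hg.filt.upward _ h _ h2)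
    · have hb := hsub _ (Or.inr h)
      have hm : IRL.ld f (f * c) ∈ F ∪ I := by
        rw [← hg.inter_eq]
        exact ⟨hg.B_ld _ hfBC.1 _ hb.1, hg.C_ld _ hfBC.2 _ hb.2⟩
      rcases hm with hm | hm
      · have h3 := (IRL.mul_le_iff_ld f (IRL.ld f (f * c)) (f * c)).2 le_rfl
        exact hcF (hg.filt.upward _ (hg.filt.mul_mem _ hf _ hm) _ (h3.trans h2))
      · exact hcI (hg.I_down _ hm _ ((IRL.mul_le_iff_ld _ _ _).1 le_rfl))
end

section
/- Let B be an integral residuated lattice and F a congruence filter of B such that every element of F is strictly greater than every element of B∖F, and suppose F has a least element ⊥. Then for every x ∈ B∖F: x·⊥ and ⊥·x are each the minimum of the class [x]_F (in particular this minimum exists and x·⊥ = ⊥·x), and ⊥\x and x/⊥ are each the maximum of the class [x]_F (in particular this maximum exists and ⊥\x = x/⊥). -/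
/-- if `F` is a congruence filter of an IRL `B`, every element of `F`
is strictly greater than every element of `B ∖ F`, and `F` has a least element `⊥`,
then for every `x ∉ F`, `x·⊥` and `⊥·x` are each the minimum of `[x]_F`, and `⊥\x`
and `x/⊥` are each the maximum of `[x]_F`. -/
theorem bot_filter_sigma_gamma {B : Type*} [IRL B] (F : Set B)
    (hF : IRL.IsCongFilter F)
    (hstrict : ∀ f ∈ F, ∀ b : B, b ∉ F → b < f)
    (bF : B) (hbF : bF ∈ F) (hbot : ∀ f ∈ F, bF ≤ f) :
    ∀ x : B, x ∉ F →
      IsLeast (IRL.cls F x) (x * bF) ∧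
      IsLeast (IRL.cls F x) (bF * x) ∧
      IsGreatest (IRL.cls F x) (IRL.ld bF x) ∧
      IsGreatest (IRL.cls F x) (IRL.rd x bF) := by
  intro x _
  have monoL : ∀ a c d : B, a ≤ c → a * d ≤ c * d := fun a c d h =>
    (IRL.mul_le_iff_rd _ _ _).2 (h.trans ((IRL.mul_le_iff_rd _ _ _).1 le_rfl))
  have monoR : ∀ a c d : B, a ≤ c → d * a ≤ d * c := fun a c d h =>
    (IRL.mul_le_iff_ld _ _ _).2 (h.trans ((IRL.mul_le_iff_ld _ _ _).1 le_rfl))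
  have mulR : ∀ a d : B, a * d ≤ a := fun a d => by
    simpa using monoR d 1 a (IRL.le_one d)
  have mulL : ∀ a d : B, a * d ≤ d := fun a d => by
    simpa using monoL a 1 d (IRL.le_one a)
  have mem : ∀ a : B, a ∈ F ↔ bF ≤ a := fun a => ⟨hbot a, hF.upward bF hbF a⟩
  have th : ∀ y : B, y ∈ IRL.cls F x ↔ x * bF ≤ y ∧ y * bF ≤ x := fun y => by
    simp only [IRL.cls, IRL.theta, Set.mem_setOf_eq, mem, IRL.mul_le_iff_ld]
  have comm : ∀ y : B, bF * y = y * bF := fun y => le_antisymm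
    ((IRL.mul_le_iff_rd _ _ _).2 (hbot _ (hF.conjR bF hbF y)))
    ((IRL.mul_le_iff_ld _ _ _).2 (hbot _ (hF.conjL bF hbF y)))
  have hmin : IsLeast (IRL.cls F x) (x * bF) :=
    ⟨(th _).2 ⟨le_rfl, (mulR _ _).trans (mulR _ _)⟩, fun y hy => ((th y).1 hy).1⟩
  refine ⟨hmin, (comm x).symm ▸ hmin, ⟨(th _).2 ⟨?_, ?_⟩, fun y hy => ?_⟩,
    ⟨(th _).2 ⟨?_, ?_⟩, fun y hy => ?_⟩⟩
  · exact (IRL.mul_le_iff_ld _ _ _).1 ((mulL _ _).trans (mulR _ _))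
  · rw [← comm]
    exact (IRL.mul_le_iff_ld _ _ _).2 le_rfl
  · refine (IRL.mul_le_iff_ld _ _ _).1 ?_
    rw [comm]
    exact ((th y).1 hy).2
  · exact (IRL.mul_le_iff_rd _ _ _).1 ((mulR _ _).trans (mulR _ _))
  · exact (IRL.mul_le_iff_rd _ _ _).2 le_rfl
  · exact (IRL.mul_le_iff_rd _ _ _).1 ((th y).1 hy).2
end

section
/- Let D be a gluing of B and C over F. Then D is commutative (x·y = y·x for all x, y ∈ D) if and only if x·y = y·x for all x, y ∈ B and x·y = y·x for all x, y ∈ C. -/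
namespace IRL

variable {α : Type*} [IRL α]

lemma mul_mono_left' {x y : α} (z : α) (h : x ≤ y) : x * z ≤ y * z := by
  rw [mul_le_iff_rd]
  exact h.trans ((mul_le_iff_rd y z _).1 le_rfl)

lemma mul_mono_right' {x y : α} (z : α) (h : x ≤ y) : z * x ≤ z * y := by
  rw [mul_le_iff_ld]
  exact h.trans ((mul_le_iff_ld z y _).1 le_rfl)

end IRL

/-- Elements below some `b ∈ B \ F` lie in `B`. -/
lemma GluingOverF.mem_B_of_le {D : Type*} [IRL D] {B C F : Set D}
    (hg : GluingOverF B C F) {b z : D} (hb : b ∈ B \ F) (hz : z ≤ b) : z ∈ B := by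
  by_contra h
  have hC : z ∈ C := by
    have := hg.union_eq.symm ▸ Set.mem_univ z
    exact this.resolve_left h
  have hF : z ∉ F := fun hf => hb.2 (hg.filt.upward z hf b hz)
  exact absurd (hg.lt_BC b hb z ⟨hC, hF⟩) (not_lt_of_ge hz)

lemma GluingOverF.mixed {D : Type*} [IRL D] {B C F : Set D}
    (hg : GluingOverF B C F) (hB : ∀ x ∈ B, ∀ y ∈ B, x * y = y * x)
    {b c : D} (hb : b ∈ B \ F) (hc : c ∈ C \ F) : b * c = c * b := by
  have h1 : c * b ∈ B := hg.mem_B_of_le hb (by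
    simpa using IRL.mul_mono_left' b (IRL.le_one c))
  have h2 : b * c ∈ B := hg.mem_B_of_le hb (by
    simpa using IRL.mul_mono_right' b (IRL.le_one c))
  have hf := hg.B_rd _ h1 _ hb.1
  have hk := hg.B_ld _ hb.1 _ h2
  have cf : c ≤ IRL.rd (c * b) b := (IRL.mul_le_iff_rd _ _ _).1 le_rfl
  have ck : c ≤ IRL.ld b (b * c) := (IRL.mul_le_iff_ld _ _ _).1 le_rfl
  have f1 : IRL.rd (c * b) b * b ≤ c * b := (IRL.mul_le_iff_rd _ _ _).2 le_rfl
  have k1 : b * IRL.ld b (b * c) ≤ b * c := (IRL.mul_le_iff_ld _ _ _).2 le_rfl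
  rw [hB _ hf _ hb.1] at f1
  rw [hB _ hb.1 _ hk] at k1
  exact le_antisymm ((IRL.mul_mono_right' b cf).trans f1) ((IRL.mul_mono_left' b ck).trans k1)

/-- a gluing `D` of `B` and `C` over `F` is commutative iff both `B`
and `C` are commutative. -/
theorem gluing_commutative_iff {D : Type*} [IRL D] {B C F : Set D}
    (hg : GluingOverF B C F) :
    (∀ x y : D, x * y = y * x) ↔
      ((∀ x ∈ B, ∀ y ∈ B, x * y = y * x) ∧ (∀ x ∈ C, ∀ y ∈ C, x * y = y * x)) := by
  constructor
  · intro h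
    exact ⟨fun x _ y _ => h x y, fun x _ y _ => h x y⟩
  · rintro ⟨hB, hC⟩ x y
    have hFB : ∀ f ∈ F, f ∈ B := fun f hf => (hg.inter_eq.symm ▸ hf : f ∈ B ∩ C).1
    have hFC : ∀ f ∈ F, f ∈ C := fun f hf => (hg.inter_eq.symm ▸ hf : f ∈ B ∩ C).2
    have hU : ∀ z, z ∈ B ∨ z ∈ C := fun z => by
      have : z ∈ B ∪ C := hg.union_eq.symm ▸ Set.mem_univ z
      exact this
    have key : ∀ b ∈ B, ∀ c ∈ C, b * c = c * b := by
      intro b hb c hc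
      by_cases h1 : b ∈ F
      · exact hC _ (hFC b h1) _ hc
      by_cases h2 : c ∈ F
      · exact hB _ hb _ (hFB c h2)
      exact hg.mixed hB ⟨hb, h1⟩ ⟨hc, h2⟩
    rcases hU x with hx | hx <;> rcases hU y with hy | hy
    · exact hB x hx y hy
    · exact key x hx y hy
    · exact (key y hy x hx).symm
    · exact hC x hx y hy
end

section
/- Let D be a gluing of B and C over F, where additionally B is closed under ∨ and F ≠ {1}. Then D satisfies the semilinearity equation (u\((y\x)·u)) ∨ ((v·(x\y))/v) = 1 for all x, y, u, v ∈ D if and only if this equation holds for all x, y, u, v ∈ B and for all x, y, u, v ∈ C. -/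
namespace GluingAux

open IRL

variable {D : Type*} [IRL D]

theorem one_ld (a : D) : ld 1 a = a := by
  apply le_antisymm
  · have := (mul_le_iff_ld 1 (ld 1 a) a).2 le_rfl
    simpa using this
  · exact (mul_le_iff_ld 1 a a).1 (by simp)

theorem rd_one (a : D) : rd a 1 = a := by
  apply le_antisymm
  · have := (mul_le_iff_rd (rd a 1) 1 a).2 le_rfl
    simpa using this
  · exact (mul_le_iff_rd a 1 a).1 (by simp)

theorem ld_eq_one {x y : D} (h : x ≤ y) : ld x y = 1 :=
  le_antisymm (le_one _) ((mul_le_iff_ld x 1 y).1 (by simpa using h))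

theorem lam_one (u : D) : ld u (1 * u) = 1 := by
  rw [one_mul]; exact ld_eq_one le_rfl

theorem rho_one (v : D) : rd (v * 1) v = 1 := by
  rw [mul_one]
  exact le_antisymm (le_one _) ((mul_le_iff_rd 1 v v).1 (by simp))

theorem mul_le_left' (x y : D) : x * y ≤ y :=
  (mul_le_iff_rd x y y).2 (le_trans (le_one x)
    ((mul_le_iff_rd 1 y y).1 (by simp)))

theorem ld_of_sup {a b : D} (h : a ⊔ b = 1) : ld a b = b := by
  apply le_antisymm
  · have h1 : a ≤ rd b (ld a b) :=
      (mul_le_iff_rd _ _ _).1 ((mul_le_iff_ld _ _ _).2 le_rfl)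
    have h2 : b ≤ rd b (ld a b) :=
      (mul_le_iff_rd _ _ _).1 ((mul_le_iff_ld _ _ _).2
        ((mul_le_iff_ld _ _ _).1 ?_))
    · have h3 := sup_le h1 h2
      rw [h] at h3
      have := (mul_le_iff_rd _ _ _).2 h3
      simpa using this
    · refine (mul_le_iff_ld _ _ _).2 (le_trans (le_one _) ?_)
      exact (mul_le_iff_ld b 1 b).1 (by simp)
  · exact (mul_le_iff_ld _ _ _).1 (mul_le_left' a b)

/-- Semilinearity on a set, in terms of pairs joining to one. -/
theorem step {S : Set D}
    (hS : ∀ x ∈ S, ∀ y ∈ S, ∀ u ∈ S, ∀ v ∈ S,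
      ld u (ld y x * u) ⊔ rd (v * ld x y) v = 1)
    {a b u v : D} (ha : a ∈ S) (hb : b ∈ S) (hu : u ∈ S) (hv : v ∈ S)
    (h : a ⊔ b = 1) : ld u (a * u) ⊔ rd (v * b) v = 1 := by
  have := hS a ha b hb u hu v hv
  rwa [ld_of_sup h, ld_of_sup (by rwa [sup_comm] : b ⊔ a = 1)] at this

end GluingAux

open GluingAux IRL

/-- if `D` is a gluing of `B` and `C` over `F`, `B` is moreover closed
under joins and `F ≠ {1}`, then `D` satisfies the semilinearity equation
`(u\((y\x)·u)) ∨ ((v·(x\y))/v) = 1` iff both `B` and `C` satisfy it. -/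
theorem gluing_semilinear_iff {D : Type*} [IRL D] {B C F : Set D}
    (hg : GluingOverF B C F)
    (hBsup : ∀ x ∈ B, ∀ y ∈ B, x ⊔ y ∈ B)
    (hFne : F ≠ {1}) :
    (∀ x y u v : D,
        IRL.ld u (IRL.ld y x * u) ⊔ IRL.rd (v * IRL.ld x y) v = 1) ↔
      ((∀ x ∈ B, ∀ y ∈ B, ∀ u ∈ B, ∀ v ∈ B,
          IRL.ld u (IRL.ld y x * u) ⊔ IRL.rd (v * IRL.ld x y) v = 1) ∧
       (∀ x ∈ C, ∀ y ∈ C, ∀ u ∈ C, ∀ v ∈ C,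
          IRL.ld u (IRL.ld y x * u) ⊔ IRL.rd (v * IRL.ld x y) v = 1)) := by
  refine ⟨fun h => ⟨fun x _ y _ u _ v _ => h x y u v, fun x _ y _ u _ v _ => h x y u v⟩, ?_⟩
  rintro ⟨hB, hC⟩ x y u v
  have hmem : ∀ d : D, d ∈ B ∨ d ∈ C := fun d => by
    have : d ∈ B ∪ C := by rw [hg.union_eq]; trivial
    exact this
  have hF : ∀ d : D, d ∈ F ↔ d ∈ B ∧ d ∈ C := fun d => by
    rw [← hg.inter_eq]; rfl
  have h1 : (1 : D) ∈ B ∧ (1 : D) ∈ C := (hF 1).1 hg.one_mem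
  by_cases hle : x ≤ y
  · rw [ld_eq_one hle, rho_one]
    exact le_antisymm (IRL.le_one _) le_sup_right
  by_cases hle' : y ≤ x
  · rw [ld_eq_one hle', lam_one]
    exact le_antisymm (IRL.le_one _) le_sup_left
  have hab : ld y x ⊔ ld x y = 1 := by
    have key : (x ∈ B ∧ y ∈ B) ∨ (x ∈ C ∧ y ∈ C) := by
      by_contra hcon
      rcases hmem x with hx | hx <;> rcases hmem y with hy | hy
      · exact hcon (Or.inl ⟨hx, hy⟩)
      · refine hle (hg.lt_BC x ⟨hx, fun h => ?_⟩ y ⟨hy, fun h => ?_⟩).le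
        · exact hcon (Or.inr ⟨((hF x).1 h).2, hy⟩)
        · exact hcon (Or.inl ⟨hx, ((hF y).1 h).1⟩)
      · refine hle' (hg.lt_BC y ⟨hy, fun h => ?_⟩ x ⟨hx, fun h => ?_⟩).le
        · exact hcon (Or.inr ⟨hx, ((hF y).1 h).2⟩)
        · exact hcon (Or.inl ⟨((hF x).1 h).1, hy⟩)
      · exact hcon (Or.inr ⟨hx, hy⟩)
    rcases key with ⟨hx, hy⟩ | ⟨hx, hy⟩
    · have := hB x hx y hy 1 h1.1 1 h1.1
      simpa only [one_ld, rd_one, one_mul, mul_one] using this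
    · have := hC x hx y hy 1 h1.2 1 h1.2
      simpa only [one_ld, rd_one, one_mul, mul_one] using this
  generalize ld y x = a at hab ⊢
  generalize ld x y = b at hab ⊢
  by_cases hCB : ∀ c ∈ C, c ∈ B
  · have hall : ∀ d, d ∈ B := fun d => (hmem d).elim id (hCB d)
    exact step hB (hall a) (hall b) (hall u) (hall v) hab
  push Not at hCB
  obtain ⟨c, hcC, hcB⟩ := hCB
  have hcF : c ∉ F := fun h => hcB ((hF c).1 h).1
  have hlt : ∀ d, d ∉ F → ∀ f ∈ F, f ≠ 1 → d < f := fun d hd f hf hf1 => by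
    rcases hmem d with h | h
    · exact (hg.lt_BC d ⟨h, hd⟩ c ⟨hcC, hcF⟩).trans (hg.lt_CF c ⟨hcC, hcF⟩ f hf hf1)
    · exact hg.lt_CF d ⟨h, hd⟩ f hf hf1
  by_cases ha1 : a = 1
  · rw [ha1, lam_one]
    exact le_antisymm (IRL.le_one _) le_sup_left
  by_cases hb1 : b = 1
  · rw [hb1, rho_one]
    exact le_antisymm (IRL.le_one _) le_sup_right
  obtain ⟨f, hf, hf1⟩ : ∃ f ∈ F, f ≠ 1 := by
    by_contra hcon
    push Not at hcon
    exact hFne (Set.eq_singleton_iff_unique_mem.2 ⟨hg.one_mem, hcon⟩)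
  have haF : a ∈ F := by
    by_contra ha
    by_cases hb : b ∈ F
    · exact hb1 (by rw [← hab]; exact (sup_eq_right.2 (hlt a ha b hb hb1).le).symm)
    · have h3 := sup_le (hlt a ha f hf hf1).le (hlt b hb f hf hf1).le
      rw [hab] at h3
      exact hf1 (le_antisymm (IRL.le_one _) h3)
  have hbF : b ∈ F := by
    by_contra hb
    exact ha1 (by rw [← hab]; exact (sup_eq_left.2 (hlt b hb a haF ha1).le).symm)
  -- both in F: conjugate by v first, then by u
  have hb'F : rd (v * b) v ∈ F := hg.filt.conjR b hbF v
  have hab' : a ⊔ rd (v * b) v = 1 := by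
    rcases hmem v with hv | hv
    · have := step hB ((hF a).1 haF).1 ((hF b).1 hbF).1 h1.1 hv hab
      simpa only [one_ld, mul_one] using this
    · have := step hC ((hF a).1 haF).2 ((hF b).1 hbF).2 h1.2 hv hab
      simpa only [one_ld, mul_one] using this
  rcases hmem u with hu | hu
  · have := step hB ((hF a).1 haF).1 ((hF _).1 hb'F).1 hu h1.1 hab'
    simpa only [rd_one, one_mul] using this
  · have := step hC ((hF a).1 haF).2 ((hF _).1 hb'F).2 hu h1.2 hab'
    simpa only [rd_one, one_mul] using this
end

section
/- Let A be a GL₂-chain and a, b ∈ A with a < b < 1 and a·a = b·b. Then A has a coatom c (i.e., c < 1 and x ≤ c for every x < 1) and b → a = c. -/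
/-- A `GL₂`-chain: a bounded commutative integral residuated chain that is 2-potent
(`x·x·x = x·x`) and satisfies `x = 1 ∨ x·(x ∧ y) ≤ (x ∧ y)²`. -/
class GL2Chain (α : Type*) extends LinearOrder α, CommMonoid α where
  bot : α
  bot_le : ∀ x : α, bot ≤ x
  le_one : ∀ x : α, x ≤ 1
  himp : α → α → α
  mul_le_iff : ∀ x y z : α, x * y ≤ z ↔ y ≤ himp x z
  pot2 : ∀ x : α, x * x * x = x * x
  gl2 : ∀ x y : α, x = 1 ∨ x * min x y ≤ min x y * min x y

/-- in a GL₂-chain, if `a < b < 1` and `a² = b²`, then the chain has a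
coatom `c` and `b → a = c`. -/
theorem GL2_himp_eq_coatom {α : Type*} [GL2Chain α] (a b : α)
    (hab : a < b) (hb : b < 1) (hsq : a * a = b * b) :
    ∃ c : α, c < 1 ∧ (∀ x : α, x < 1 → x ≤ c) ∧ GL2Chain.himp b a = c := by
  have aux : ∀ u v w : α, v ≤ w → u * v ≤ u * w := fun u v w h =>
    (GL2Chain.mul_le_iff u v (u * w)).2 (h.trans ((GL2Chain.mul_le_iff u w (u * w)).1 le_rfl))
  have haa : a * a ≤ a := by
    have h := aux a a 1 (GL2Chain.le_one a)
    rwa [mul_one] at h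
  refine ⟨GL2Chain.himp b a, ?_, ?_, rfl⟩
  · by_contra h
    have h1 := (GL2Chain.mul_le_iff b 1 a).2 (not_lt.1 h)
    rw [mul_one] at h1
    exact absurd hab (not_lt.2 h1)
  · intro x hx
    rw [← GL2Chain.mul_le_iff]
    refine le_trans ?_ (hsq ▸ haa)
    rcases le_total x b with h | h
    · exact aux b x b h
    · rcases GL2Chain.gl2 x b with h1 | h1
      · exact absurd h1 hx.ne
      · rw [min_eq_right h] at h1
        rwa [mul_comm b x]
end

section
/- Let A be a GL₂-chain and a, b ∈ A with a < b < 1 and a·a ≠ b·b. Then b → a is the greatest element of the set A(a) := {x ∈ A | x·x = a·a}: that is, (b → a)·(b → a) = a·a, and x ≤ b → a for every x ∈ A with x·x = a·a. -/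
theorem GL2_mul_mono {α : Type*} [GL2Chain α] {x y z w : α} (h : x ≤ y) (h' : z ≤ w) :
    x * z ≤ y * w := by
  have key : ∀ p q r : α, q ≤ r → p * q ≤ p * r := fun p q r hqr =>
    (GL2Chain.mul_le_iff p q (p * r)).2
      (hqr.trans ((GL2Chain.mul_le_iff p r (p * r)).1 le_rfl))
  calc x * z ≤ x * w := key _ _ _ h'
    _ = w * x := mul_comm _ _
    _ ≤ w * y := key _ _ _ h
    _ = y * w := mul_comm _ _

theorem GL2_sq_le {α : Type*} [GL2Chain α] {x y : α} (h : x * x ≤ y) : x * x ≤ y * y := by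
  have e : x * x * (x * x) = x * x := by
    rw [← mul_assoc, GL2Chain.pot2, GL2Chain.pot2]
  rw [← e]
  exact GL2_mul_mono h h

theorem GL2_mul_le_sq {α : Type*} [GL2Chain α] {x y : α} (hx : x < 1) (h : y ≤ x) :
    x * y ≤ y * y := by
  have := GL2Chain.gl2 x y
  rw [min_eq_right h] at this
  exact this.resolve_left hx.ne

/-- in a GL₂-chain, if `a < b < 1` and `a² ≠ b²`, then `b → a` is the
greatest element of `A(a) = {x | x² = a²}`. -/
theorem GL2_himp_eq_max_block {α : Type*} [GL2Chain α] (a b : α)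
    (hab : a < b) (hb : b < 1) (hsq : a * a ≠ b * b) :
    GL2Chain.himp b a * GL2Chain.himp b a = a * a ∧
    ∀ x : α, x * x = a * a → x ≤ GL2Chain.himp b a := by
  have hlt : ¬ b * b ≤ a * a := fun h => hsq (le_antisymm (GL2_mul_mono hab.le hab.le) h)
  have sq_le_self : ∀ y : α, y * a ≤ a := fun y => by
    have := GL2_mul_mono (GL2Chain.le_one y) (le_refl a)
    rwa [one_mul] at this
  refine ⟨?_, fun x hx => ?_⟩
  · have hac : a ≤ GL2Chain.himp b a := (GL2Chain.mul_le_iff b a a).1 (sq_le_self b)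
    have hbc : b * GL2Chain.himp b a ≤ a := (GL2Chain.mul_le_iff b _ a).2 le_rfl
    have hcb : GL2Chain.himp b a ≤ b := by
      by_contra hn
      exact hlt (GL2_sq_le ((GL2_mul_mono le_rfl (not_le.1 hn).le).trans hbc))
    exact le_antisymm (GL2_sq_le ((GL2_mul_mono hcb le_rfl).trans hbc)) (GL2_mul_mono hac hac)
  · have hxb : x ≤ b := by
      by_contra hn
      have hn' := (not_le.1 hn).le
      exact hlt (hx ▸ GL2_mul_mono hn' hn')
    refine (GL2Chain.mul_le_iff b x a).1 ((GL2_mul_le_sq hb hxb).trans ?_)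
    rw [hx]
    exact sq_le_self a
end

section
/- Let A be a GL₂-chain that has no coatom, i.e., there is no c ∈ A with c < 1 and x ≤ c for every x < 1. Then every element of A is idempotent: x·x = x for all x ∈ A (A is a Gödel algebra). -/
/-- a GL₂-chain with no coatom is a Gödel algebra: every element is
idempotent. -/
theorem GL2_no_coatom_idempotent {α : Type*} [GL2Chain α]
    (h : ¬ ∃ c : α, c < 1 ∧ ∀ x : α, x < 1 → x ≤ c) :
    ∀ x : α, x * x = x := by
  intro a
  by_contra hne
  have h1 : a * a ≤ a := by
    rw [GL2Chain.mul_le_iff]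
    refine le_trans (GL2Chain.le_one a) ?_
    rw [← GL2Chain.mul_le_iff, mul_one]
  have hlt : a * a < a := lt_of_le_of_ne h1 hne
  refine h ⟨GL2Chain.himp a (a * a), ?_, ?_⟩
  · refine lt_of_le_of_ne (GL2Chain.le_one _) fun he => ?_
    have h2 : a * 1 ≤ a * a := (GL2Chain.mul_le_iff _ _ _).2 he.ge
    rw [mul_one] at h2
    exact absurd hlt (not_lt.2 h2)
  · intro x hx
    rcases le_total a x with hax | hxa
    · rcases GL2Chain.gl2 x a with h3 | h3
      · exact absurd h3 hx.ne
      · rw [min_eq_right hax, mul_comm x a] at h3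
        exact (GL2Chain.mul_le_iff _ _ _).1 h3
    · exact le_trans hxa ((GL2Chain.mul_le_iff _ _ _).1 le_rfl)
end

section
/- (Local finiteness of GL₂-chains.) Let A be a GL₂-chain and X ⊆ A a finite subset. Then the smallest subset of A containing X ∪ {0, 1} and closed under the operations min, max, · and → is finite. -/
namespace GL2Aux
variable {α : Type*} [GL2Chain α]

lemma mul_mono {a b : α} (c : α) (h : a ≤ b) : c * a ≤ c * b :=
  (GL2Chain.mul_le_iff c a _).2 (h.trans ((GL2Chain.mul_le_iff c b _).1 le_rfl))

lemma sq_mono {a b : α} (h : a ≤ b) : a * a ≤ b * b :=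
  (mul_mono a h).trans (by rw [mul_comm a b]; exact mul_mono b h)

lemma sq_le (a : α) : a * a ≤ a := by
  simpa using mul_mono a (GL2Chain.le_one a)

lemma sq_sq (a : α) : (a * a) * (a * a) = a * a := by
  rw [← mul_assoc, GL2Chain.pot2, GL2Chain.pot2]

lemma mul_eq {x y : α} (hx : x ≠ 1) (h : y ≤ x) : x * y = y * y := by
  rcases GL2Chain.gl2 x y with h1 | h1
  · exact absurd h1 hx
  · rw [min_eq_right h] at h1
    exact le_antisymm h1 (by rw [mul_comm x y]; exact mul_mono y h)

/-- `w` is the greatest element with square below `z`. -/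
def R (z w : α) : Prop := w * w ≤ z ∧ ∀ y : α, y * y ≤ z → y ≤ w

lemma R_unique {z w w' : α} (h : R z w) (h' : R z w') : w = w' :=
  le_antisymm (h'.2 _ h.1) (h.2 _ h'.1)

lemma R_sq {z w : α} (h : R z w) : w * w = z * z := by
  apply le_antisymm
  · rw [← sq_sq w]; exact sq_mono h.1
  · exact sq_mono (h.2 _ (sq_le z))

lemma R_of_sq {z w : α} (h : R (z * z) w) : R z w :=
  ⟨h.1.trans (sq_le z), fun y hy => h.2 y (by rw [← sq_sq y]; exact sq_mono hy)⟩

lemma R_of_R {z v w : α} (h : R z v) (h' : R v w) : R z w := by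
  refine ⟨?_, fun y hy => (h.2 y hy).trans (h'.2 v (sq_le v))⟩
  rw [R_sq h']; exact h.1

lemma himp_cases (x z : α) : GL2Chain.himp x z = 1 ∨ GL2Chain.himp x z = z ∨
    (GL2Chain.himp x z < 1 ∧ ∀ y : α, y < 1 → y ≤ GL2Chain.himp x z) ∨ R z (GL2Chain.himp x z) := by
  have key : ∀ y, x * y ≤ z ↔ y ≤ GL2Chain.himp x z := fun y => GL2Chain.mul_le_iff x y z
  by_cases h1 : GL2Chain.himp x z = 1
  · exact Or.inl h1
  have hlt : GL2Chain.himp x z < 1 := lt_of_le_of_ne (GL2Chain.le_one _) h1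
  have hxz : z < x := by
    by_contra hc
    have := (key 1).1 (by rw [mul_one]; exact not_lt.1 hc)
    exact absurd this (not_le.2 hlt)
  by_cases hx : x = 1
  · right; left
    apply le_antisymm
    · have := (key _).2 le_rfl
      rwa [hx, one_mul, ← hx] at this
    · exact (key z).1 (by rw [hx, one_mul])
  right; right
  by_cases hs : x * x ≤ z
  · left
    refine ⟨hlt, fun y hy => (key y).1 ?_⟩
    rcases le_total y x with h | h
    · exact (mul_mono x h).trans hs
    · rw [mul_comm, mul_eq hy.ne h]; exact hs
  · right
    have hle : ∀ y, x * y ≤ z → y ≤ x := by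
      intro y hy
      by_contra hc
      exact hs ((mul_mono x (not_le.1 hc).le).trans hy)
    constructor
    · have h := (key _).2 (le_refl (GL2Chain.himp x z))
      rwa [mul_eq hx (hle _ h)] at h
    · intro y hy
      apply (key y).1
      rcases le_total y x with h | h
      · rw [mul_eq hx h]; exact hy
      · exact absurd ((sq_mono h).trans hy) hs

end GL2Aux

open GL2Aux in
/-- local finiteness of GL₂-chains: for a finite `X ⊆ A`, the smallest
subset of `A` containing `X ∪ {0, 1}` and closed under `min`, `max`, `·`, `→` is
finite. -/
theorem GL2_locally_finite {α : Type*} [GL2Chain α] (X : Set α) (hX : X.Finite) :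
    (⋂₀ {T : Set α | X ⊆ T ∧ (GL2Chain.bot : α) ∈ T ∧ (1 : α) ∈ T ∧
        ∀ x ∈ T, ∀ y ∈ T,
          min x y ∈ T ∧ max x y ∈ T ∧ x * y ∈ T ∧ GL2Chain.himp x y ∈ T}).Finite := by
  let C : Set α := {c | c < 1 ∧ ∀ y : α, y < 1 → y ≤ c}
  have hC : C.Finite := by
    apply Set.Subsingleton.finite
    intro a ha b hb
    exact le_antisymm (hb.2 a ha.1) (ha.2 b hb.1)
  let Z : Set α := X ∪ {GL2Chain.bot, 1} ∪ C
  have hZ : Z.Finite := (hX.union (Set.toFinite _)).union hC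
  let T : Set α := Z ∪ (fun z => z * z) '' Z ∪ ⋃ z ∈ Z, {w | R z w}
  have hT : T.Finite := by
    refine (hZ.union (hZ.image _)).union (hZ.biUnion fun z _ => ?_)
    apply Set.Subsingleton.finite
    intro a ha b hb
    exact R_unique ha hb
  have hZT : ∀ z ∈ Z, z ∈ T := fun z hz => Or.inl (Or.inl hz)
  have hST : ∀ z ∈ Z, z * z ∈ T := fun z hz => Or.inl (Or.inr ⟨z, hz, rfl⟩)
  have hRT : ∀ z ∈ Z, ∀ w, R z w → w ∈ T := fun z hz w hw =>
    Or.inr (Set.mem_biUnion hz hw)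
  have h1 : (1 : α) ∈ T := hZT _ (Or.inl (Or.inr (Or.inr rfl)))
  have cases : ∀ t ∈ T, t ∈ Z ∨ (∃ z ∈ Z, z * z = t) ∨ ∃ z ∈ Z, R z t := by
    rintro t ((h | ⟨z, hz, h⟩) | h)
    · exact Or.inl h
    · exact Or.inr (Or.inl ⟨z, hz, h⟩)
    · simp only [Set.mem_iUnion] at h
      obtain ⟨z, hz, h⟩ := h
      exact Or.inr (Or.inr ⟨z, hz, h⟩)
  have hsq : ∀ t ∈ T, t * t ∈ T := by
    intro t ht
    rcases cases t ht with h | ⟨z, hz, rfl⟩ | ⟨z, hz, h⟩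
    · exact hST t h
    · rw [sq_sq]; exact ht
    · rw [R_sq h]; exact hST z hz
  have hR : ∀ t ∈ T, ∀ w, R t w → w ∈ T := by
    intro t ht w hw
    rcases cases t ht with h | ⟨z, hz, rfl⟩ | ⟨z, hz, h⟩
    · exact hRT t h w hw
    · exact hRT z hz w (R_of_sq hw)
    · exact hRT z hz w (R_of_R h hw)
  refine hT.subset (Set.sInter_subset_of_mem ⟨?_, ?_, h1, ?_⟩)
  · exact fun x hx => hZT _ (Or.inl (Or.inl hx))
  · exact hZT _ (Or.inl (Or.inr (Or.inl rfl)))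
  · intro x hx y hy
    refine ⟨?_, ?_, ?_, ?_⟩
    · rcases min_choice x y with h | h <;> rw [h] <;> assumption
    · rcases max_choice x y with h | h <;> rw [h] <;> assumption
    · by_cases hx1 : x = 1
      · rw [hx1, one_mul]; exact hy
      by_cases hy1 : y = 1
      · rw [hy1, mul_one]; exact hx
      rcases le_total y x with h | h
      · rw [mul_eq hx1 h]; exact hsq y hy
      · rw [mul_comm, mul_eq hy1 h]; exact hsq x hx
    · rcases himp_cases x y with h | h | h | h
      · rw [h]; exact h1
      · rw [h]; exact hy
      · exact hZT _ (Or.inr h)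
      · exact hR y hy _ h
end

section
/- (Failure of amalgamation for GL₂-chains.) There is no GL₂-chain amalgam of the V-formation (A, B, C) described in the context: for every GL₂-chain D and all injective maps h : B → D and k : C → D that are order-preserving and preserve ·, → and 1, it is impossible that h(a_B) = k(a_C). -/
/-- Multiplication of the four-element GL₂-chain `B` with `0_B < a_B < b_B < 1_B`
(encoded as `0 < 1 < 2 < 3` in `Fin 4`): `x·y = min x y` except `b_B·b_B = a_B`. -/
def Bmul (x y : Fin 4) : Fin 4 := if x = 2 ∧ y = 2 then 1 else min x y

/-- The residuum of `Bmul`. -/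
def Bhimp (x y : Fin 4) : Fin 4 :=
  if x ≤ y then 3 else if x = 2 ∧ y = 1 then 2 else y

/-- Multiplication of the four-element Gödel chain `C` with `0_C < a_C < c_C < 1_C`
(encoded as `0 < 1 < 2 < 3` in `Fin 4`): `x·y = min x y`. -/
def Cmul (x y : Fin 4) : Fin 4 := min x y

/-- The residuum of `Cmul`. -/
def Chimp (x y : Fin 4) : Fin 4 := if x ≤ y then 3 else y

/-- failure of amalgamation for GL₂-chains: there is no GL₂-chain
amalgam of the V-formation `(A, B, C)`: for every GL₂-chain `D` and injective maps
`h : B → D`, `k : C → D` that are order-preserving and preserve `·`, `→` and `1`,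
it is impossible that `h(a_B) = k(a_C)`. -/
theorem GL2_amalgamation_fails (D : Type) [GL2Chain D] (h k : Fin 4 → D)
    (hinj : Function.Injective h)
    (hmono : ∀ x y : Fin 4, x ≤ y → h x ≤ h y)
    (hmul : ∀ x y : Fin 4, h (Bmul x y) = h x * h y)
    (hhimp : ∀ x y : Fin 4, h (Bhimp x y) = GL2Chain.himp (h x) (h y))
    (hone : h 3 = 1)
    (kinj : Function.Injective k)
    (kmono : ∀ x y : Fin 4, x ≤ y → k x ≤ k y)
    (kmul : ∀ x y : Fin 4, k (Cmul x y) = k x * k y)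
    (khimp : ∀ x y : Fin 4, k (Chimp x y) = GL2Chain.himp (k x) (k y))
    (kone : k 3 = 1) :
    h 1 ≠ k 1 := by
  intro hk
  have mono : ∀ x y z : D, y ≤ z → x * y ≤ x * z := fun x y z hyz =>
    (GL2Chain.mul_le_iff x y (x * z)).2
      (hyz.trans ((GL2Chain.mul_le_iff x z (x * z)).1 le_rfl))
  have hbb : h 1 = h 2 * h 2 := hmul 2 2
  have hcc : k 2 = k 2 * k 2 := kmul 2 2
  have hca : k 1 = GL2Chain.himp (k 2) (k 1) := khimp 2 1
  have hc1 : k 2 ≠ 1 := by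
    rw [← kone]
    exact fun e => absurd (kinj e) (by decide)
  rcases le_total (k 2) (h 2) with hle | hle
  · have h1 : k 2 * k 2 ≤ h 2 * h 2 := by
      refine (mono _ _ _ hle).trans ?_
      rw [mul_comm]
      exact mono _ _ _ hle
    rw [← hcc, ← hbb, hk] at h1
    exact absurd (kinj (le_antisymm h1 (kmono 1 2 (by decide)))) (by decide)
  · rcases GL2Chain.gl2 (k 2) (h 2) with h1 | h1
    · exact hc1 h1
    · rw [min_eq_right hle, ← hbb, hk] at h1
      have h2 := (GL2Chain.mul_le_iff _ _ _).1 h1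
      rw [← hca, ← hk] at h2
      exact absurd (hinj (le_antisymm h2 (hmono 1 2 (by decide)))) (by decide)
end

section
/- (One-sided amalgams of the critical V-formation are amalgams.) Let D be any bounded commutative integral residuated lattice: a bounded lattice with least element 0 and greatest element 1, a commutative monoid operation · with unit 1, and a binary operation → with x·y ≤ z ⟺ y ≤ x → z for all x, y, z, where 1 is the greatest element. Let h : B → D be a map preserving min, max, ·, →, 0 and 1, and let k : C → D be an injective map preserving min, max, ·, →, 0 and 1, such that h(a_B) = k(a_C). Then h is injective. -/
/-- A bounded commutative integral residuated lattice: a bounded lattice with least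
element `bot` and greatest element `1`, a commutative monoid operation `·` with unit
`1`, and a residuum `→` with `x·y ≤ z ↔ y ≤ x → z`. -/
class BCIRL (α : Type*) extends Lattice α, CommMonoid α where
  bot : α
  bot_le : ∀ x : α, bot ≤ x
  le_one : ∀ x : α, x ≤ 1
  himp : α → α → α
  mul_le_iff : ∀ x y z : α, x * y ≤ z ↔ y ≤ himp x z

/-- one-sided amalgams of the critical V-formation are amalgams: if
`D` is any bounded commutative integral residuated lattice, `h : B → D` is a
homomorphism (preserving `min`, `max`, `·`, `→`, `0`, `1`), `k : C → D` is an
injective homomorphism, and `h(a_B) = k(a_C)`, then `h` is injective. -/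
theorem one_sided_amalgam_is_amalgam (D : Type) [BCIRL D] (h k : Fin 4 → D)
    (hmin : ∀ x y : Fin 4, h (min x y) = h x ⊓ h y)
    (hmax : ∀ x y : Fin 4, h (max x y) = h x ⊔ h y)
    (hmul : ∀ x y : Fin 4, h (Bmul x y) = h x * h y)
    (hhimp : ∀ x y : Fin 4, h (Bhimp x y) = BCIRL.himp (h x) (h y))
    (hzero : h 0 = BCIRL.bot)
    (hone : h 3 = 1)
    (kinj : Function.Injective k)
    (kmin : ∀ x y : Fin 4, k (min x y) = k x ⊓ k y)
    (kmax : ∀ x y : Fin 4, k (max x y) = k x ⊔ k y)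
    (kmul : ∀ x y : Fin 4, k (Cmul x y) = k x * k y)
    (khimp : ∀ x y : Fin 4, k (Chimp x y) = BCIRL.himp (k x) (k y))
    (kzero : k 0 = BCIRL.bot)
    (kone : k 3 = 1)
    (hk : h 1 = k 1) :
    Function.Injective h := by
  have k01 : k 0 ≠ k 1 := fun e => absurd (kinj e) (by decide)
  have k13 : k 1 ≠ k 3 := fun e => absurd (kinj e) (by decide)
  have k03 : k 0 ≠ k 3 := fun e => absurd (kinj e) (by decide)
  have e01 : h 0 ≠ h 1 := by rw [hzero, hk, ← kzero]; exact k01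
  have e13 : h 1 ≠ h 3 := by rw [hone, hk, ← kone]; exact k13
  have e03 : h 0 ≠ h 3 := by rw [hzero, hone, ← kzero, ← kone]; exact k03
  have m22 : h 1 = h 2 * h 2 := hmul 2 2
  have m00 : h 0 = h 0 * h 0 := hmul 0 0
  have m33 : h 3 = h 3 * h 3 := hmul 3 3
  have i21 : h 2 = BCIRL.himp (h 2) (h 1) := hhimp 2 1
  have i11 : h 3 = BCIRL.himp (h 1) (h 1) := hhimp 1 1
  have e23 : h 2 ≠ h 3 := fun e => e13 (by rw [m22, e, ← m33])
  have e02 : h 0 ≠ h 2 := fun e => e01 (by rw [m22, ← e, ← m00])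
  have e12 : h 1 ≠ h 2 := fun e => e23 (by rw [i21, ← e, ← i11])
  intro x y hxy
  fin_cases x <;> fin_cases y <;> first
    | rfl
    | exact absurd hxy e01
    | exact absurd hxy e02
    | exact absurd hxy e03
    | exact absurd hxy e12
    | exact absurd hxy e13
    | exact absurd hxy e23
    | exact absurd hxy.symm e01
    | exact absurd hxy.symm e02
    | exact absurd hxy.symm e03
    | exact absurd hxy.symm e12
    | exact absurd hxy.symm e13
    | exact absurd hxy.symm e23
end
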